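/- Let u : A → B be a morphism of noetherian rings, M a finitely generated A-module, and N a finitely generated B-module which is flat as an A-module. Consider M ⊗_A N as a B-module. If M is an almost Cohen-Macaulay A-module and for every P ∈ Supp(M) the fiber module N_P/PN_P is a Cohen-Macaulay B_P/PB_P-module, then M ⊗_A N is an almost Cohen-Macaulay B-module. -/

import Mathlib

noncomputable section

open TensorProduct

universe u v w





/-- The depth of the ideal `I` on the module `M`: the supremum of lengths of
`M`-regular sequences with entries in `I`. -/
noncomputable def idealDepth (A : Type u) [CommRing A] (I : Ideal A)
    (M : Type v) [AddCommGroup M] [Module A M] : ℕ∞ :=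
  sSup {n : ℕ∞ | ∃ rs : List A, (rs.length : ℕ∞) = n ∧ (∀ r ∈ rs, r ∈ I) ∧
    RingTheory.Sequence.IsRegular M rs}

/-- The depth of a module over a local ring. -/
noncomputable def localDepth (A : Type u) [CommRing A] [IsLocalRing A]
    (M : Type v) [AddCommGroup M] [Module A M] : ℕ∞ :=
  idealDepth A (IsLocalRing.maximalIdeal A) M

/-- The (Krull) dimension of a module, i.e. the Krull dimension of its support. -/
noncomputable def supportDim (A : Type u) [CommRing A]
    (M : Type v) [AddCommGroup M] [Module A M] : WithBot ℕ∞ :=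
  Order.krullDim (Module.support A M)

/-- `depth (M_P)` : the depth of the localization of `M` at a prime `P`,
over the local ring `A_P`. -/
noncomputable def depthAt (A : Type u) [CommRing A]
    (M : Type v) [AddCommGroup M] [Module A M] (P : PrimeSpectrum A) : ℕ∞ :=
  localDepth (Localization.AtPrime P.asIdeal) (LocalizedModule P.asIdeal.primeCompl M)

/-- `ht_M(P) = dim (M_P)` : the height of a prime `P` in the support of `M`,
i.e. the dimension of the localized module `M_P` over `A_P`. -/
noncomputable def heightAt (A : Type u) [CommRing A]
    (M : Type v) [AddCommGroup M] [Module A M] (P : PrimeSpectrum A) : WithBot ℕ∞ :=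
  supportDim (Localization.AtPrime P.asIdeal) (LocalizedModule P.asIdeal.primeCompl M)

/-- Serre's condition `(S_n)` for a module: for every `P` in the support,
`depth (M_P) ≥ min (n, ht_M(P))`. -/
def SerreCondS (A : Type u) [CommRing A] (n : ℕ)
    (M : Type v) [AddCommGroup M] [Module A M] : Prop :=
  ∀ P ∈ Module.support A M,
    min (n : WithBot ℕ∞) (heightAt A M P) ≤ (depthAt A M P : WithBot ℕ∞)

/-- The condition `(C_n)` for a module: for every `P` in the support,
`depth (M_P) ≥ min (n, ht_M(P)) - 1`, equivalently
`min (n, ht_M(P)) ≤ depth (M_P) + 1`. -/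
def CondC (A : Type u) [CommRing A] (n : ℕ)
    (M : Type v) [AddCommGroup M] [Module A M] : Prop :=
  ∀ P ∈ Module.support A M,
    min (n : WithBot ℕ∞) (heightAt A M P) ≤ (depthAt A M P : WithBot ℕ∞) + 1

/-- A module `M` is almost Cohen-Macaulay if `depth(P, M) = depth (M_P)` for every
`P` in the support of `M` (Kang's definition). -/
def IsAlmostCMModule (A : Type u) [CommRing A]
    (M : Type v) [AddCommGroup M] [Module A M] : Prop :=
  ∀ P ∈ Module.support A M, idealDepth A P.asIdeal M = depthAt A M P

/-- A module `M` is Cohen-Macaulay if `depth (M_P) = dim (M_P)` for every `P` in its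
support. -/
def IsCMModule (A : Type u) [CommRing A]
    (M : Type v) [AddCommGroup M] [Module A M] : Prop :=
  ∀ P ∈ Module.support A M, (depthAt A M P : WithBot ℕ∞) = heightAt A M P

/-- A ring is almost Cohen-Macaulay if it is an almost Cohen-Macaulay module over
itself. -/
abbrev IsAlmostCMRing (A : Type u) [CommRing A] : Prop := IsAlmostCMModule A A

/-- A ring is Cohen-Macaulay if it is a Cohen-Macaulay module over itself, i.e. all its
localizations at primes have depth equal to dimension. -/
abbrev IsCMRing (A : Type u) [CommRing A] : Prop := IsCMModule A A

/-- A ring satisfies `(C_n)` if it does so as a module over itself. -/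
abbrev RingCondC (A : Type u) [CommRing A] (n : ℕ) : Prop := CondC A n A

/-- A ring satisfies `(S_n)` if it does so as a module over itself. -/
abbrev RingSerreCondS (A : Type u) [CommRing A] (n : ℕ) : Prop := SerreCondS A n A






variable (A : Type u) [CommRing A] (B : Type u) [CommRing B] [Algebra A B]

/-- The image in `B` of the complement of a prime `P` of `A`, as a submonoid of `B`. -/
noncomputable def fiberSubmonoid (P : PrimeSpectrum A) : Submonoid B :=
  Submonoid.map (algebraMap A B) P.asIdeal.primeCompl

/-- `PB_P` : the extension of the prime `P` of `A` to the localization `B_P` of `B`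
at (the image of) the complement of `P`. -/
noncomputable def fiberIdeal (P : PrimeSpectrum A) :
    Ideal (Localization (fiberSubmonoid A B P)) :=
  Ideal.map ((algebraMap B (Localization (fiberSubmonoid A B P))).comp (algebraMap A B))
    P.asIdeal

/-- The fiber ring `B_P / P B_P` of `A → B` at a prime `P` of `A`. -/
noncomputable def fiberRing (P : PrimeSpectrum A) : Type u :=
  Localization (fiberSubmonoid A B P) ⧸ fiberIdeal A B P

noncomputable instance (P : PrimeSpectrum A) : CommRing (fiberRing A B P) :=
  inferInstanceAs (CommRing (Localization (fiberSubmonoid A B P) ⧸ fiberIdeal A B P))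

/-- The fiber module `N_P / P N_P` of a `B`-module `N` at a prime `P` of `A`. -/
noncomputable def fiberModule (P : PrimeSpectrum A)
    (N : Type u) [AddCommGroup N] [Module B N] : Type u :=
  LocalizedModule (fiberSubmonoid A B P) N ⧸
    (fiberIdeal A B P •
      (⊤ : Submodule (Localization (fiberSubmonoid A B P))
        (LocalizedModule (fiberSubmonoid A B P) N)))

noncomputable instance (P : PrimeSpectrum A) (N : Type u) [AddCommGroup N] [Module B N] :
    AddCommGroup (fiberModule A B P N) :=
  inferInstanceAs (AddCommGroup (LocalizedModule (fiberSubmonoid A B P) N ⧸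
    (fiberIdeal A B P •
      (⊤ : Submodule (Localization (fiberSubmonoid A B P))
        (LocalizedModule (fiberSubmonoid A B P) N)))))

/-- `N_P / P N_P` is a module over the fiber ring `B_P / P B_P`. -/
noncomputable instance (P : PrimeSpectrum A) (N : Type u) [AddCommGroup N] [Module B N] :
    Module (fiberRing A B P) (fiberModule A B P N) :=
  inferInstanceAs (Module (Localization (fiberSubmonoid A B P) ⧸ fiberIdeal A B P)
    (LocalizedModule (fiberSubmonoid A B P) N ⧸
      (fiberIdeal A B P •
        (⊤ : Submodule (Localization (fiberSubmonoid A B P))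
          (LocalizedModule (fiberSubmonoid A B P) N)))))








/-- The canonical `B`-module structure on `M ⊗[A] N`, where `N` is a `B`-module,
given by `b • (m ⊗ n) = m ⊗ (b • n)`. -/
noncomputable instance tensorRightModule (A : Type u) [CommRing A] (B : Type u) [CommRing B]
    [Algebra A B] (M : Type u) [AddCommGroup M] [Module A M]
    (N : Type u) [AddCommGroup N] [Module A N] [Module B N] [IsScalarTower A B N] :
    Module B (M ⊗[A] N) where
  smul b x := (TensorProduct.comm A M N).symm (b • TensorProduct.comm A M N x)
  one_smul x := by
    show (TensorProduct.comm A M N).symm ((1 : B) • TensorProduct.comm A M N x) = x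
    simp
  mul_smul a b x := by
    show (TensorProduct.comm A M N).symm ((a * b) • TensorProduct.comm A M N x) =
      (TensorProduct.comm A M N).symm (a • TensorProduct.comm A M N
        ((TensorProduct.comm A M N).symm (b • TensorProduct.comm A M N x)))
    simp [mul_smul]
  smul_zero b := by
    show (TensorProduct.comm A M N).symm (b • TensorProduct.comm A M N 0) = 0
    simp
  smul_add b x y := by
    show (TensorProduct.comm A M N).symm (b • TensorProduct.comm A M N (x + y)) =
      (TensorProduct.comm A M N).symm (b • TensorProduct.comm A M N x) +
      (TensorProduct.comm A M N).symm (b • TensorProduct.comm A M N y)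
    simp
  add_smul a b x := by
    show (TensorProduct.comm A M N).symm ((a + b) • TensorProduct.comm A M N x) =
      (TensorProduct.comm A M N).symm (a • TensorProduct.comm A M N x) +
      (TensorProduct.comm A M N).symm (b • TensorProduct.comm A M N x)
    simp [add_smul]
  zero_smul x := by
    show (TensorProduct.comm A M N).symm ((0 : B) • TensorProduct.comm A M N x) = 0
    simp



open RingTheory.Sequence in
theorem natCast_le_idealDepth_iff {R : Type u} [CommRing R] {I : Ideal R} {X : Type v}
    [AddCommGroup X] [Module R X] (hI : I • (⊤ : Submodule R X) ≠ ⊤) (n : ℕ) :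
    (n : ℕ∞) ≤ idealDepth R I X ↔
      ∃ rs : List R, rs.length = n ∧ (∀ r ∈ rs, r ∈ I) ∧ IsWeaklyRegular X rs := by
  constructor
  · intro h
    obtain _ | k := n
    · exact ⟨[], by simp⟩
    · have hk : (k : ℕ∞) < idealDepth R I X :=
        lt_of_lt_of_le (by exact_mod_cast Nat.lt_succ_self k) h
      obtain ⟨_, ⟨rs, rfl, hmem, hreg⟩, hlt⟩ := lt_sSup_iff.mp hk
      have hlen : k + 1 ≤ rs.length := by exact_mod_cast hlt
      refine ⟨rs.take (k + 1), by simpa using hlen, fun r hr ↦ hmem r (List.mem_of_mem_take hr), ?_⟩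
      have := hreg.toIsWeaklyRegular
      rw [← List.take_append_drop (k + 1) rs, isWeaklyRegular_append_iff] at this
      exact this.1
  · rintro ⟨rs, rfl, hmem, hreg⟩
    refine le_sSup ⟨rs, rfl, hmem, hreg, fun h ↦ hI (top_le_iff.mp ?_)⟩
    conv_lhs => rw [h]
    exact Submodule.smul_mono_left (Ideal.span_le.mpr hmem)

theorem smul_top_ne_top_of_mem_support {R : Type u} [CommRing R] {X : Type v}
    [AddCommGroup X] [Module R X] [Module.Finite R X] {P : PrimeSpectrum R}
    (hP : P ∈ Module.support R X) : P.asIdeal • (⊤ : Submodule R X) ≠ ⊤ := by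
  intro h
  obtain ⟨r, hr, hr0⟩ := Submodule.exists_sub_one_mem_and_smul_eq_zero_of_fg_of_le_smul
    P.asIdeal (⊤ : Submodule R X) Module.Finite.fg_top h.ge
  rw [Module.mem_support_iff_of_finite] at hP
  have hrP : r ∈ P.asIdeal := hP (Module.mem_annihilator.mpr fun x ↦ hr0 x trivial)
  exact P.2.ne_top ((Ideal.eq_top_iff_one _).mpr (by simpa using sub_mem hrP hr))

theorem smul_top_ne_top_of_isLocalRing {R : Type u} [CommRing R] [IsLocalRing R] {X : Type v}
    [AddCommGroup X] [Module R X] [Module.Finite R X] [Nontrivial X] :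
    IsLocalRing.maximalIdeal R • (⊤ : Submodule R X) ≠ ⊤ :=
  (Submodule.top_ne_ideal_smul_of_le_jacobson_annihilator
    (IsLocalRing.maximalIdeal_le_jacobson _)).symm

open RingTheory.Sequence in
theorem natCast_le_depthAt_iff {R : Type u} [CommRing R] {X : Type v}
    [AddCommGroup X] [Module R X] [Module.Finite R X] {P : PrimeSpectrum R}
    (hP : P ∈ Module.support R X) (n : ℕ) :
    (n : ℕ∞) ≤ depthAt R X P ↔
      ∃ rs : List (Localization.AtPrime P.asIdeal), rs.length = n ∧
        (∀ r ∈ rs, r ∈ IsLocalRing.maximalIdeal (Localization.AtPrime P.asIdeal)) ∧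
        IsWeaklyRegular (LocalizedModule P.asIdeal.primeCompl X) rs :=
  have : Nontrivial (LocalizedModule P.asIdeal.primeCompl X) := hP
  natCast_le_idealDepth_iff smul_top_ne_top_of_isLocalRing n

theorem exists_isSMulRegular_mem_of_forall_associatedPrimes {R : Type u} [CommRing R]
    [IsNoetherianRing R] {X : Type v} [AddCommGroup X] [Module R X] [Module.Finite R X]
    {I : Ideal R} (h : ∀ p ∈ associatedPrimes R X, ¬ I ≤ p) : ∃ r ∈ I, IsSMulRegular X r := by
  by_contra! hcon
  obtain ⟨p, hp, hle⟩ := (I.subset_union_prime_finite (associatedPrimes.finite R X) (f := id) 0 0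
    fun _ h _ _ ↦ h.1).1 (by
      simp_rw [id, biUnion_associatedPrimes_eq_zero_divisors]
      intro r hr
      have := hcon r hr
      rw [isSMulRegular_iff_right_eq_zero_of_smul] at this
      push Not at this
      obtain ⟨x, hx, hx0⟩ := this
      exact ⟨x, hx0, hx⟩)
  exact h p hp hle

theorem natCast_le_depthAt_of_isWeaklyRegular {R : Type u} [CommRing R] {X : Type v}
    [AddCommGroup X] [Module R X] [Module.Finite R X] {P : PrimeSpectrum R}
    (hP : P ∈ Module.support R X) {rs : List R} (hmem : ∀ r ∈ rs, r ∈ P.asIdeal)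
    (hreg : RingTheory.Sequence.IsWeaklyRegular X rs) :
    (rs.length : ℕ∞) ≤ depthAt R X P := by
  rw [natCast_le_depthAt_iff hP]
  refine ⟨rs.map (algebraMap R _), by simp, fun r hr ↦ ?_,
    hreg.of_isLocalizedModule _ P.asIdeal.primeCompl
      (LocalizedModule.mkLinearMap P.asIdeal.primeCompl X)⟩
  obtain ⟨a, ha, rfl⟩ := List.mem_map.mp hr
  exact (IsLocalization.AtPrime.to_map_mem_maximal_iff _ P.asIdeal a).mpr (hmem a ha)

theorem idealDepth_le_depthAt {R : Type u} [CommRing R] {X : Type v}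
    [AddCommGroup X] [Module R X] [Module.Finite R X] {P : PrimeSpectrum R}
    (hP : P ∈ Module.support R X) : idealDepth R P.asIdeal X ≤ depthAt R X P := by
  refine sSup_le ?_
  rintro _ ⟨rs, rfl, hmem, hreg⟩
  exact natCast_le_depthAt_of_isWeaklyRegular hP hmem hreg.toIsWeaklyRegular

theorem coe_depthAt_le_heightAt {R : Type u} [CommRing R] [IsNoetherianRing R] {X : Type v}
    [AddCommGroup X] [Module R X] [Module.Finite R X] {P : PrimeSpectrum R}
    (hP : P ∈ Module.support R X) : (depthAt R X P : WithBot ℕ∞) ≤ heightAt R X P := by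
  have : Nontrivial (LocalizedModule P.asIdeal.primeCompl X) := hP
  obtain ⟨c, hc⟩ := WithBot.ne_bot_iff_exists.mp (Module.supportDim_ne_bot_of_nontrivial
    (Localization.AtPrime P.asIdeal) (LocalizedModule P.asIdeal.primeCompl X))
  change _ ≤ Module.supportDim _ _
  rw [← hc]
  refine WithBot.coe_le_coe.mpr (sSup_le ?_)
  rintro _ ⟨rs, rfl, hmem, hreg⟩
  have h := Module.supportDim_add_length_eq_supportDim_of_isRegular rs hreg
  have hn := hreg.quot_ofList_smul_nontrivial ⊤
  obtain ⟨d, hd⟩ := WithBot.ne_bot_iff_exists.mp (Module.supportDim_ne_bot_of_nontrivial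
    (Localization.AtPrime P.asIdeal) (LocalizedModule P.asIdeal.primeCompl X ⧸
      (Ideal.ofList rs • (⊤ : Submodule (Localization.AtPrime P.asIdeal)
        (LocalizedModule P.asIdeal.primeCompl X)))))
  rw [← hc, ← hd] at h
  have h' : d + rs.length = c := by exact_mod_cast h
  rw [← h']
  exact le_add_self

theorem smul_top_quotSMulTop_ne_top {R : Type u} [CommRing R] {X : Type v} [AddCommGroup X]
    [Module R X] {I : Ideal R} {r : R} (hr : r ∈ I) (hI : I • (⊤ : Submodule R X) ≠ ⊤) :
    I • (⊤ : Submodule R (QuotSMulTop r X)) ≠ ⊤ := by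
  by_contra eq
  absurd congrArg (Submodule.comap (Submodule.mkQ _)) eq
  simpa [Submodule.comap_smul_top_of_surjective I _ (Submodule.mkQ_surjective _),
    Submodule.smul_mono_left ((Ideal.span_singleton_le_iff_mem I).mpr hr),
    ← Submodule.ideal_span_singleton_smul] using hI

open CategoryTheory Abelian in
theorem natCast_le_idealDepth_quotSMulTop {R : Type u} [CommRing R] [IsNoetherianRing R]
    {X : Type u} [AddCommGroup X] [Module R X] [Module.Finite R X] {I : Ideal R}
    (hI : I • (⊤ : Submodule R X) ≠ ⊤) {x : R} (hx : x ∈ I) (hreg : IsSMulRegular X x) {n : ℕ}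
    (hn : ((n + 1 : ℕ) : ℕ∞) ≤ idealDepth R I X) :
    (n : ℕ∞) ≤ idealDepth R I (QuotSMulTop x X) := by
  obtain ⟨rs, hlen, hmem, hrs⟩ := (natCast_le_idealDepth_iff hI _).mp hn
  have hrs' : RingTheory.Sequence.IsRegular X rs := ⟨hrs, fun h ↦ hI (top_le_iff.mp
    (by conv_lhs => rw [h]
        exact Submodule.smul_mono_left (Ideal.span_le.mpr hmem)))⟩
  have rees := (ModuleCat.exists_isRegular_tfae I (n + 1) (ModuleCat.of R X) hI.lt_top).out 3 1
  have hext := rees.mp ⟨rs, hlen, hmem, hrs'⟩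
  have hI' := smul_top_quotSMulTop_ne_top hx hI
  have rees' := (ModuleCat.exists_isRegular_tfae I n
    (ModuleCat.of R (QuotSMulTop x X)) hI'.lt_top).out 3 1
  obtain ⟨ts, ht, htmem, htreg⟩ := rees'.mpr fun i hi ↦ by
      have zero1 := AddCommGrpCat.isZero_of_iff_subsingleton.mpr (hext i (by omega))
      have zero2 := AddCommGrpCat.isZero_of_iff_subsingleton.mpr (hext (i + 1) (by omega))
      exact AddCommGrpCat.subsingleton_of_isZero <| ShortComplex.Exact.isZero_of_both_zeros
        ((Ext.covariant_sequence_exact₃' _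
          (IsSMulRegular.smulShortComplex_shortExact (M := ModuleCat.of R X) hreg)) i (i + 1) rfl)
        (zero1.eq_zero_of_src _) (zero2.eq_zero_of_tgt _)
  exact (natCast_le_idealDepth_iff hI' _).mpr ⟨ts, ht, htmem, htreg.toIsWeaklyRegular⟩

theorem idealDepth_congr {R : Type u} [CommRing R] {X : Type v} {Y : Type w} [AddCommGroup X]
    [Module R X] [AddCommGroup Y] [Module R Y] (e : X ≃ₗ[R] Y) (I : Ideal R) :
    idealDepth R I X = idealDepth R I Y := by
  simp only [idealDepth, e.isRegular_congr]

theorem natCast_le_idealDepth_quotient_ofList {R : Type u} [CommRing R] [IsNoetherianRing R]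
    {X : Type u} [AddCommGroup X] [Module R X] [Module.Finite R X] {I : Ideal R}
    (hI : I • (⊤ : Submodule R X) ≠ ⊤) {rs : List R} (hmem : ∀ r ∈ rs, r ∈ I)
    (hreg : RingTheory.Sequence.IsWeaklyRegular X rs) {n : ℕ}
    (hn : ((n + rs.length : ℕ) : ℕ∞) ≤ idealDepth R I X) :
    (n : ℕ∞) ≤ idealDepth R I (X ⧸ (Ideal.ofList rs • ⊤ : Submodule R X)) := by
  induction rs generalizing X with
  | nil =>
    rw [idealDepth_congr (Submodule.quotEquivOfEqBot _ (by simp))]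
    simpa using hn
  | cons r rs ih =>
    rw [RingTheory.Sequence.isWeaklyRegular_cons_iff] at hreg
    rw [List.forall_mem_cons] at hmem
    rw [idealDepth_congr (Submodule.quotOfListConsSMulTopEquivQuotSMulTopInner X r rs)]
    exact ih (smul_top_quotSMulTop_ne_top hmem.1 hI) hmem.2 hreg.2
      (natCast_le_idealDepth_quotSMulTop hI hmem.1 hreg.1 hn)

/-- A regular sequence modulo which the maximal ideal is associated is of maximal length. -/
theorem localDepth_le_length_of_maximalIdeal_mem_associatedPrimes {R : Type u} [CommRing R]
    [IsNoetherianRing R] [IsLocalRing R] {X : Type u} [AddCommGroup X] [Module R X]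
    [Module.Finite R X] [Nontrivial X] {rs : List R}
    (hmem : ∀ r ∈ rs, r ∈ IsLocalRing.maximalIdeal R)
    (hreg : RingTheory.Sequence.IsWeaklyRegular X rs)
    (hass : IsLocalRing.maximalIdeal R ∈
      associatedPrimes R (X ⧸ (Ideal.ofList rs • ⊤ : Submodule R X))) :
    localDepth R X ≤ rs.length := by
  by_contra! hlt
  have hI := smul_top_ne_top_of_isLocalRing (R := R) (X := X)
  have hle : ((1 + rs.length : ℕ) : ℕ∞) ≤ idealDepth R (IsLocalRing.maximalIdeal R) X := by
    rw [add_comm]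
    exact_mod_cast Order.add_one_le_of_lt hlt
  have h1 := natCast_le_idealDepth_quotient_ofList hI hmem hreg hle
  have : Nontrivial (X ⧸ (Ideal.ofList rs • ⊤ : Submodule R X)) :=
    ((IsLocalRing.isRegular_iff_isWeaklyRegular_of_subset_maximalIdeal
      hmem).mpr hreg).quot_ofList_smul_nontrivial ⊤
  obtain ⟨ts, hts, htmem, htreg⟩ := (natCast_le_idealDepth_iff
    (smul_top_ne_top_of_isLocalRing) 1).mp h1
  obtain ⟨t, rfl⟩ := List.length_eq_one_iff.mp hts
  rw [RingTheory.Sequence.isWeaklyRegular_singleton_iff] at htreg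
  have hz : t ∈ ⋃ p ∈ associatedPrimes R (X ⧸ (Ideal.ofList rs • ⊤ : Submodule R X)),
      (p : Set R) := Set.mem_biUnion hass (htmem t (by simp))
  rw [biUnion_associatedPrimes_eq_zero_divisors] at hz
  obtain ⟨x, hx0, hx⟩ := hz
  exact hx0 (htreg.right_eq_zero_of_smul hx)

/-- Localization at a prime commutes with the quotient by the multiples of an ideal. -/
def localizedModuleQuotientEquiv {R : Type u} [CommRing R] (X : Type v) [AddCommGroup X]
    [Module R X] (S : Submonoid R) (I : Ideal R) :
    LocalizedModule S (X ⧸ (I • ⊤ : Submodule R X)) ≃ₗ[Localization S]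
      LocalizedModule S X ⧸ (I.map (algebraMap R (Localization S)) •
        (⊤ : Submodule (Localization S) (LocalizedModule S X))) :=
  (localizedQuotientEquiv _ _).symm ≪≫ₗ
    Submodule.quotEquivOfEq _ _ (by rw [Submodule.localized,
      Submodule.localized'_smul, Ideal.localized'_eq_map, Submodule.localized'_top])

theorem mem_support_localizedModule_iff {R : Type u} [CommRing R] {X : Type v}
    [AddCommGroup X] [Module R X] {S : Submonoid R} (q : PrimeSpectrum (Localization S)) :
    q ∈ Module.support (Localization S) (LocalizedModule S X) ↔
      PrimeSpectrum.comap (algebraMap R (Localization S)) q ∈ Module.support R X := by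
  rw [Module.mem_support_iff', Module.mem_support_iff']
  constructor
  · rintro ⟨m, hm⟩
    induction m using LocalizedModule.induction_on with
    | h x s =>
      refine ⟨x, fun r hr hrx ↦ hm (algebraMap R _ r) hr ?_⟩
      rw [algebraMap_smul, LocalizedModule.smul'_mk, hrx, LocalizedModule.zero_mk]
  · rintro ⟨x, hx⟩
    refine ⟨LocalizedModule.mk x 1, fun r hr h0 ↦ ?_⟩
    obtain ⟨a, s, rfl⟩ := IsLocalization.exists_mk'_eq S r
    rw [← Localization.mk_eq_mk', LocalizedModule.mk_smul_mk, ← LocalizedModule.zero_mk 1,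
      LocalizedModule.mk_eq] at h0
    obtain ⟨t, ht⟩ := h0
    refine hx (t * a) (fun hmem ↦ hr ?_) (by simpa [mul_smul, Submonoid.smul_def] using ht)
    change algebraMap R _ (t * a) ∈ q.asIdeal at hmem
    rw [map_mul] at hmem
    have ha := (q.2.mem_or_mem hmem).resolve_left fun ht' ↦
      q.2.ne_top (Ideal.eq_top_of_isUnit_mem _ ht' (IsLocalization.map_units _ t))
    rw [IsLocalization.mk'_eq_mul_mk'_one]
    exact q.asIdeal.mul_mem_right _ ha

theorem heightAt_eq_height {R : Type u} [CommRing R] {X : Type v} [AddCommGroup X]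
    [Module R X] {P : PrimeSpectrum R} (hP : P ∈ Module.support R X) :
    heightAt R X P = (Order.height (⟨P, hP⟩ : Module.support R X) : ℕ∞) := by
  rw [Order.height_eq_krullDim_Iic]
  let e := IsLocalization.AtPrime.primeSpectrumOrderIso (Localization.AtPrime P.asIdeal) P.asIdeal
  refine Order.krullDim_eq_of_orderIso
    { toFun := fun q ↦ ⟨⟨(e q.1).1, (mem_support_localizedModule_iff q.1).mp q.2⟩, (e q.1).2⟩
      invFun := fun p ↦ ⟨e.symm ⟨p.1.1, p.2⟩, (mem_support_localizedModule_iff _).mpr (by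
        have h : (e (e.symm ⟨p.1.1, p.2⟩)).1 = p.1.1 := by rw [e.apply_symm_apply]
        have h' := p.1.2
        rw [← h] at h'
        exact h')⟩
      left_inv := fun q ↦ Subtype.ext (e.symm_apply_apply q.1)
      right_inv := fun p ↦ Subtype.ext (Subtype.ext (by simp))
      map_rel_iff' := ?_ }
  intro a b
  exact e.map_rel_iff

theorem heightAt_add_one_le {R : Type u} [CommRing R] {X : Type v} [AddCommGroup X]
    [Module R X] {P P' : PrimeSpectrum R} (hP : P ∈ Module.support R X) (hlt : P < P') :
    heightAt R X P + 1 ≤ heightAt R X P' := by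
  rw [heightAt_eq_height hP, heightAt_eq_height (Module.mem_support_mono hlt.le hP)]
  have : (⟨P, hP⟩ : Module.support R X) < ⟨P', Module.mem_support_mono hlt.le hP⟩ := hlt
  exact_mod_cast Order.height_add_one_le this

theorem heightAt_ne_top {R : Type u} [CommRing R] [IsNoetherianRing R] {X : Type v}
    [AddCommGroup X] [Module R X] (P : PrimeSpectrum R) : heightAt R X P ≠ ⊤ := by
  refine ne_top_of_le_ne_top ?_ (Module.supportDim_le_ringKrullDim (Localization.AtPrime P.asIdeal)
    (LocalizedModule P.asIdeal.primeCompl X))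
  exact (ringKrullDim_lt_top).ne

theorem depthAt_ne_top {R : Type u} [CommRing R] [IsNoetherianRing R] {X : Type v}
    [AddCommGroup X] [Module R X] [Module.Finite R X] {P : PrimeSpectrum R}
    (hP : P ∈ Module.support R X) : depthAt R X P ≠ ⊤ := by
  intro h
  have h1 := coe_depthAt_le_heightAt hP
  rw [h] at h1
  exact heightAt_ne_top P (top_le_iff.mp h1)

theorem depthAt_le_length_of_mem_associatedPrimes {R : Type u} [CommRing R] [IsNoetherianRing R]
    {X : Type u} [AddCommGroup X] [Module R X] [Module.Finite R X] {P : PrimeSpectrum R}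
    (hP : P ∈ Module.support R X) {rs : List R} (hmem : ∀ r ∈ rs, r ∈ P.asIdeal)
    (hreg : RingTheory.Sequence.IsWeaklyRegular X rs)
    (hass : P.asIdeal ∈ associatedPrimes R (X ⧸ (Ideal.ofList rs • ⊤ : Submodule R X))) :
    depthAt R X P ≤ rs.length := by
  have : Nontrivial (LocalizedModule P.asIdeal.primeCompl X) := hP
  have h := localDepth_le_length_of_maximalIdeal_mem_associatedPrimes
    (R := Localization.AtPrime P.asIdeal) (X := LocalizedModule P.asIdeal.primeCompl X)
    (rs := rs.map (algebraMap R _)) ?_ (hreg.of_isLocalizedModule _ P.asIdeal.primeCompl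
      (LocalizedModule.mkLinearMap P.asIdeal.primeCompl X)) ?_
  · rwa [List.length_map] at h
  · intro r hr
    obtain ⟨a, ha, rfl⟩ := List.mem_map.mp hr
    exact (IsLocalization.AtPrime.to_map_mem_maximal_iff _ P.asIdeal a).mpr (hmem a ha)
  · have := Module.associatedPrimes.mem_associatedPrimes_atPrime_of_mem_associatedPrimes hass
    rw [← Ideal.map_ofList]
    rwa [LinearEquiv.AssociatedPrimes.eq
      (localizedModuleQuotientEquiv X P.asIdeal.primeCompl (Ideal.ofList rs))] at this

/-- Modules of depth at least the dimension minus one are almost Cohen-Macaulay. -/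
theorem isAlmostCMModule_of_heightAt_le {R : Type u} [CommRing R] [IsNoetherianRing R]
    {X : Type u} [AddCommGroup X] [Module R X] [Module.Finite R X]
    (h : ∀ P ∈ Module.support R X, heightAt R X P ≤ (depthAt R X P : WithBot ℕ∞) + 1) :
    IsAlmostCMModule R X := by
  intro P hP
  refine le_antisymm (idealDepth_le_depthAt hP) ?_
  have hne := ne_top_of_le_ne_top (depthAt_ne_top hP) (idealDepth_le_depthAt hP)
  obtain ⟨d, hd⟩ := ENat.ne_top_iff_exists.mp hne
  have hI := smul_top_ne_top_of_mem_support hP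
  obtain ⟨rs, hlen, hmem, hreg⟩ := (natCast_le_idealDepth_iff hI d).mp hd.le
  obtain ⟨p, hp, hle⟩ : ∃ p ∈ associatedPrimes R (X ⧸ (Ideal.ofList rs • ⊤ : Submodule R X)),
      P.asIdeal ≤ p := by
    by_contra! hcon
    obtain ⟨r, hr, hrreg⟩ := exists_isSMulRegular_mem_of_forall_associatedPrimes hcon
    have := (natCast_le_idealDepth_iff hI (d + 1)).mpr ⟨rs ++ [r], by simp [hlen], by
      simpa [or_imp, forall_and] using ⟨hmem, hr⟩, by
      rw [RingTheory.Sequence.isWeaklyRegular_append_iff,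
        RingTheory.Sequence.isWeaklyRegular_singleton_iff]
      exact ⟨hreg, hrreg⟩⟩
    rw [← hd] at this
    exact absurd this (by norm_cast; omega)
  let P' : PrimeSpectrum R := ⟨p, hp.1⟩
  have hle' : P ≤ P' := hle
  have hP' : P' ∈ Module.support R X := Module.mem_support_mono hle' hP
  have hd' : depthAt R X P' ≤ d :=
    hlen ▸ depthAt_le_length_of_mem_associatedPrimes hP' (fun r hr ↦ hle (hmem r hr)) hreg hp
  rw [← hd]
  refine le_trans ?_ hd'
  obtain heq | hlt := hle'.eq_or_lt
  · rw [heq]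
  · have h1 := (heightAt_add_one_le hP hlt).trans (h P' hP')
    have h2 := (add_le_add_left (coe_depthAt_le_heightAt hP) 1).trans h1
    have h3 : depthAt R X P + 1 ≤ depthAt R X P' + 1 := by exact_mod_cast h2
    exact (ENat.add_le_add_iff_right (by simp)).mp h3

/-- Strictly between two primes that are not adjacent there is a prime outside any
given finite set. -/
theorem exists_isPrime_notMem_of_lt_of_lt {R : Type u} [CommRing R] [IsNoetherianRing R]
    {p₀ p₁ p : Ideal R} [p₀.IsPrime] [p₁.IsPrime] [p.IsPrime] (h₀ : p₀ < p₁) (h₁ : p₁ < p)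
    {S : Set (Ideal R)} (hS : S.Finite) (hprime : ∀ q ∈ S, q.IsPrime) :
    ∃ q : Ideal R, q.IsPrime ∧ q ∉ S ∧ p₀ < q ∧ q < p := by
  let T : Set (Ideal R) := {q ∈ S | q < p} ∪ {p₀}
  have hT : T.Finite := (hS.sep _).union (Set.finite_singleton _)
  have hlt : ∀ q ∈ T, q < p := by
    rintro q (hq | rfl)
    exacts [hq.2, h₀.trans h₁]
  have hnot : ¬ (p : Set R) ⊆ ⋃ q ∈ T, (q : Set R) := by
    have hTprime : ∀ q ∈ T, q ≠ ⊥ → q ≠ ⊥ → q.IsPrime := by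
      rintro q (hq | rfl) _ _
      exacts [hprime q hq.1, inferInstance]
    intro hsub
    obtain ⟨q, hq, hle⟩ :=
      (Ideal.subset_union_prime_finite (f := fun q : Ideal R ↦ q) hT ⊥ ⊥ hTprime).mp hsub
    exact (hlt q hq).not_ge hle
  obtain ⟨a, hap, ha⟩ := Set.not_subset.mp hnot
  simp only [Set.mem_iUnion, not_exists] at ha
  have hle : p₀ ⊔ Ideal.span {a} ≤ p :=
    sup_le (h₀.trans h₁).le ((Ideal.span_singleton_le_iff_mem _).mpr hap)
  obtain ⟨q, hq, hqp⟩ := Ideal.exists_minimalPrimes_le hle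
  have hqle := hq.1.2
  have haq : a ∈ q := hqle (Ideal.mem_sup_right (Ideal.mem_span_singleton_self a))
  have hqprime := hq.1.1
  have hp₀q : p₀ < q := lt_of_le_of_ne (le_sup_left.trans hqle)
    fun h ↦ ha p₀ (Or.inr rfl) (h ▸ haq)
  have hqlt : q < p := by
    refine lt_of_le_of_ne hqp ?_
    rintro rfl
    have hsurj := Ideal.Quotient.mk_surjective (I := p₀)
    have hk : ∀ r : Ideal R, p₀ ≤ r → RingHom.ker (Ideal.Quotient.mk p₀) ≤ r := fun r hr ↦ by
      rwa [Ideal.mk_ker]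
    have hmap : ∀ r s : Ideal R, p₀ ≤ r → r < s →
        r.map (Ideal.Quotient.mk p₀) < s.map (Ideal.Quotient.mk p₀) := by
      intro r s hr hrs
      refine lt_of_le_of_ne (Ideal.map_mono hrs.le) fun h ↦ hrs.ne ?_
      have := congr_arg (Ideal.comap (Ideal.Quotient.mk p₀)) h
      rwa [Ideal.comap_map_of_surjective' _ hsurj, Ideal.comap_map_of_surjective' _ hsurj,
        Ideal.mk_ker, sup_eq_left.mpr hr, sup_eq_left.mpr (hr.trans hrs.le)] at this
    have i0 := Ideal.map_isPrime_of_surjective hsurj (hk p₀ le_rfl)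
    have i1 := Ideal.map_isPrime_of_surjective hsurj (hk p₁ h₀.le)
    have i2 := Ideal.map_isPrime_of_surjective hsurj (hk q (h₀.trans h₁).le)
    have e1 := Ideal.height_add_one_le_of_lt_of_isPrime (hmap p₀ p₁ le_rfl h₀)
    have e2 := Ideal.height_add_one_le_of_lt_of_isPrime (hmap p₁ q h₀.le h₁)
    have e3 := Ideal.map_height_le_one_of_mem_minimalPrimes hq
    have e4 : (1 : ℕ∞) + 1 ≤ 1 :=
      ((add_le_add_left (le_add_self.trans e1) 1).trans e2).trans e3
    exact absurd e4 (by decide)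
  exact ⟨q, hqprime, fun h ↦ ha q (Or.inl ⟨h, hqlt⟩) haq, hp₀q, hqlt⟩

theorem heightAt_quotient_ofList_add_length {R : Type u} [CommRing R] [IsNoetherianRing R]
    {X : Type v} [AddCommGroup X] [Module R X] [Module.Finite R X] {P : PrimeSpectrum R}
    (hP : P ∈ Module.support R X) {rs : List R} (hmem : ∀ r ∈ rs, r ∈ P.asIdeal)
    (hreg : RingTheory.Sequence.IsWeaklyRegular X rs) :
    heightAt R (X ⧸ (Ideal.ofList rs • ⊤ : Submodule R X)) P + rs.length = heightAt R X P := by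
  have : Nontrivial (LocalizedModule P.asIdeal.primeCompl X) := hP
  have hmem' : ∀ r ∈ rs.map (algebraMap R (Localization.AtPrime P.asIdeal)),
      r ∈ IsLocalRing.maximalIdeal (Localization.AtPrime P.asIdeal) := by
    intro r hr
    obtain ⟨a, ha, rfl⟩ := List.mem_map.mp hr
    exact (IsLocalization.AtPrime.to_map_mem_maximal_iff _ P.asIdeal a).mpr (hmem a ha)
  have h1 := hreg.of_isLocalizedModule (Localization.AtPrime P.asIdeal) P.asIdeal.primeCompl
    (LocalizedModule.mkLinearMap P.asIdeal.primeCompl X)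
  have h2 := (IsLocalRing.isRegular_iff_isWeaklyRegular_of_subset_maximalIdeal hmem').mpr h1
  have h3 := Module.supportDim_add_length_eq_supportDim_of_isRegular _ h2
  rw [List.length_map] at h3
  refine Eq.trans ?_ h3
  congr 1
  rw [← Ideal.map_ofList]
  exact Module.supportDim_eq_of_equiv
    (localizedModuleQuotientEquiv X P.asIdeal.primeCompl (Ideal.ofList rs))

theorem length_add_one_le_depthAt_of_notMem_associatedPrimes {R : Type u} [CommRing R]
    [IsNoetherianRing R] {X : Type v} [AddCommGroup X] [Module R X] [Module.Finite R X]
    {P : PrimeSpectrum R} (hP : P ∈ Module.support R X) {rs : List R}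
    (hmem : ∀ r ∈ rs, r ∈ P.asIdeal) (hreg : RingTheory.Sequence.IsWeaklyRegular X rs)
    (hass : P.asIdeal ∉ associatedPrimes R (X ⧸ (Ideal.ofList rs • ⊤ : Submodule R X))) :
    rs.length + 1 ≤ depthAt R X P := by
  let Rp := Localization.AtPrime P.asIdeal
  let Xp := LocalizedModule P.asIdeal.primeCompl X
  have hmem' : ∀ r ∈ rs.map (algebraMap R Rp), r ∈ IsLocalRing.maximalIdeal Rp := by
    intro r hr
    obtain ⟨a, ha, rfl⟩ := List.mem_map.mp hr
    exact (IsLocalization.AtPrime.to_map_mem_maximal_iff _ P.asIdeal a).mpr (hmem a ha)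
  have h1 := hreg.of_isLocalizedModule Rp P.asIdeal.primeCompl
    (LocalizedModule.mkLinearMap P.asIdeal.primeCompl X)
  have hass' : ∀ q ∈ associatedPrimes Rp
      (Xp ⧸ (Ideal.ofList (rs.map (algebraMap R Rp)) • ⊤ : Submodule Rp Xp)),
      ¬ IsLocalRing.maximalIdeal Rp ≤ q := by
    intro q hq hle
    have hqm : q = IsLocalRing.maximalIdeal Rp :=
      (IsLocalRing.le_maximalIdeal hq.1.ne_top).antisymm hle
    rw [hqm, ← Ideal.map_ofList, ← LinearEquiv.AssociatedPrimes.eq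
      (localizedModuleQuotientEquiv X P.asIdeal.primeCompl (Ideal.ofList rs))] at hq
    have := Module.associatedPrimes.comap_mem_associatedPrimes_of_mem_associatedPrimes_of_isLocalizedModule_of_fg
      P.asIdeal.primeCompl (LocalizedModule.mkLinearMap P.asIdeal.primeCompl
        (X ⧸ (Ideal.ofList rs • ⊤ : Submodule R X))) _ hq (IsNoetherian.noetherian _)
    exact hass ((IsLocalization.AtPrime.under_maximalIdeal Rp P.asIdeal) ▸ this)
  obtain ⟨r, hr, hrreg⟩ := exists_isSMulRegular_mem_of_forall_associatedPrimes hass'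
  have := (natCast_le_depthAt_iff hP (rs.length + 1)).mpr ⟨rs.map (algebraMap R Rp) ++ [r],
    by simp, by
      intro s hs
      rcases List.mem_append.mp hs with h | h
      · exact hmem' s h
      · rw [List.mem_singleton.mp h]; exact hr, by
      rw [RingTheory.Sequence.isWeaklyRegular_append_iff,
        RingTheory.Sequence.isWeaklyRegular_singleton_iff]
      exact ⟨h1, hrreg⟩⟩
  exact_mod_cast this

/-- An almost Cohen-Macaulay module has depth at least the dimension minus one at every
prime of its support. -/
theorem IsAlmostCMModule.heightAt_le {R : Type u} [CommRing R] [IsNoetherianRing R]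
    {X : Type v} [AddCommGroup X] [Module R X] [Module.Finite R X] (h : IsAlmostCMModule R X)
    {P : PrimeSpectrum R} (hP : P ∈ Module.support R X) :
    heightAt R X P ≤ (depthAt R X P : WithBot ℕ∞) + 1 := by
  obtain ⟨d, hd⟩ := ENat.ne_top_iff_exists.mp (depthAt_ne_top hP)
  have hI := smul_top_ne_top_of_mem_support hP
  obtain ⟨rs, hlen, hmem, hreg⟩ := (natCast_le_idealDepth_iff hI d).mp
    (hd.trans (h P hP).symm).le
  let Y := X ⧸ (Ideal.ofList rs • ⊤ : Submodule R X)
  have hsupp : Module.support R Y = Module.support R X ∩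
      PrimeSpectrum.zeroLocus (Ideal.ofList rs) := Module.support_quotient _
  have hrs : Ideal.ofList rs ≤ P.asIdeal := Ideal.span_le.mpr hmem
  have hPY : P ∈ Module.support R Y := hsupp ▸ ⟨hP, hrs⟩
  have hY : Order.height (⟨P, hPY⟩ : Module.support R Y) ≤ 1 := by
    by_contra! hcon
    obtain ⟨q₁, q₀, h01, h1⟩ := Order.one_lt_height_iff.mp hcon
    obtain ⟨q, hq, hqS, hlt, hlt'⟩ := exists_isPrime_notMem_of_lt_of_lt
      (p₀ := q₀.1.asIdeal) (p₁ := q₁.1.asIdeal) (p := P.asIdeal) h01 h1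
      (associatedPrimes.finite R Y) (fun q hq ↦ hq.1)
    let P' : PrimeSpectrum R := ⟨q, hq⟩
    have hP'Y : P' ∈ Module.support R Y :=
      Module.mem_support_mono (show q₀.1 ≤ P' from hlt.le) q₀.2
    rw [hsupp] at hP'Y
    have h2 := length_add_one_le_depthAt_of_notMem_associatedPrimes hP'Y.1
      (fun r hr ↦ hP'Y.2 (Ideal.subset_span hr)) hreg hqS
    rw [← h P' hP'Y.1, hlen] at h2
    obtain ⟨rs', hlen', hmem', hreg'⟩ := (natCast_le_idealDepth_iff
      (smul_top_ne_top_of_mem_support hP'Y.1) (d + 1)).mp (by exact_mod_cast h2)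
    have h3 := (natCast_le_idealDepth_iff hI (d + 1)).mpr
      ⟨rs', hlen', fun r hr ↦ hlt'.le (hmem' r hr), hreg'⟩
    rw [h P hP, ← hd] at h3
    exact absurd h3 (by norm_cast; omega)
  rw [← heightAt_quotient_ofList_add_length hP hmem hreg, heightAt_eq_height hPY, hlen, ← hd]
  rw [add_comm]
  exact_mod_cast add_le_add_right hY (d : ℕ∞)

section FlatTensor

/-- The standard module structure of a tensor product over the base ring; as a local instance
it takes precedence over `tensorRightModule`. -/
abbrev tensorBaseModule (R : Type u) [CommRing R] (N : Type v) [AddCommGroup N] [Module R N]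
    (M : Type w) [AddCommGroup M] [Module R M] : Module R (N ⊗[R] M) :=
  TensorProduct.leftModule

attribute [local instance] tensorBaseModule

open RingTheory.Sequence Pointwise

variable {R : Type u} [CommRing R] {S : Type u} [CommRing S] [Algebra R S]

theorem rTensor_mk_exact_smul {N : Type u} [AddCommGroup N] [Module R N] [Module S N]
    [IsScalarTower R S N] (y : S) {M : Type v} [AddCommGroup M] [Module R M]
    {x : N ⊗[R] M} :
    AlgebraTensorModule.rTensor R M (Submodule.mkQ (y • (⊤ : Submodule S N))) x = 0 ↔
      ∃ z : N ⊗[R] M, y • z = x := by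
  have hex : Function.Exact ((LinearMap.lsmul S N y).restrictScalars R)
      ((Submodule.mkQ (y • (⊤ : Submodule S N))).restrictScalars R) := by
    intro n
    simp [Submodule.mem_smul_pointwise_iff_exists]
  have hsurj : Function.Surjective
      ((Submodule.mkQ (y • (⊤ : Submodule S N))).restrictScalars R) :=
    Submodule.mkQ_surjective (y • (⊤ : Submodule S N))
  exact (rTensor_exact M hex hsurj) x

/-- Tensoring commutes with the quotient by a scalar acting on the left factor. -/
def quotSMulTopTensorEquiv (N : Type u) [AddCommGroup N] [Module R N] [Module S N]
    [IsScalarTower R S N] (y : S) (M : Type v) [AddCommGroup M] [Module R M] :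
    QuotSMulTop y (N ⊗[R] M) ≃ₗ[S] QuotSMulTop y N ⊗[R] M :=
  Submodule.quotEquivOfEq _ _ (by
    ext x
    rw [LinearMap.mem_ker, rTensor_mk_exact_smul, Submodule.mem_smul_pointwise_iff_exists]
    simp) ≪≫ₗ
  LinearMap.quotKerEquivOfSurjective
    (AlgebraTensorModule.rTensor R M (Submodule.mkQ (y • (⊤ : Submodule S N))))
    (LinearMap.rTensor_surjective M
      (g := (Submodule.mkQ (y • (⊤ : Submodule S N))).restrictScalars R)
      (Submodule.mkQ_surjective (y • (⊤ : Submodule S N))))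

/-- Tensoring commutes with the quotient by a scalar acting on the right factor. -/
def quotSMulTopTensorEquivRight (N : Type u) [AddCommGroup N] [Module R N] [Module S N]
    [IsScalarTower R S N] (r : R) (M : Type v) [AddCommGroup M] [Module R M] :
    QuotSMulTop (algebraMap R S r) (N ⊗[R] M) ≃ₗ[S] N ⊗[R] QuotSMulTop r M :=
  Submodule.quotEquivOfEq _ _ (by
    ext x
    have hex : Function.Exact (LinearMap.lsmul R M r)
        (Submodule.mkQ (r • (⊤ : Submodule R M))) := by
      intro n
      simp [Submodule.mem_smul_pointwise_iff_exists]
    have h := lTensor_exact N hex (Submodule.mkQ_surjective _) x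
    rw [LinearMap.mem_ker, Submodule.mem_smul_pointwise_iff_exists]
    refine Iff.trans ?_ h.symm
    have h2 : ∀ z : N ⊗[R] M, (LinearMap.lsmul R M r).lTensor N z = algebraMap R S r • z := by
      intro z
      induction z with
      | zero => simp
      | tmul n m => simp [smul_tmul']
      | add a b ha hb => simp [ha, hb]
    simp [h2]) ≪≫ₗ
  LinearMap.quotKerEquivOfSurjective
    (AlgebraTensorModule.lTensor S N (Submodule.mkQ (r • (⊤ : Submodule R M))))
    (LinearMap.lTensor_surjective N (Submodule.mkQ_surjective _))

theorem isSMulRegular_tensor_of_exact {N : Type u} [AddCommGroup N] [Module R N] [Module S N]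
    [IsScalarTower R S N] [Module.Flat R N] {M₁ M₂ M₃ : Type v} [AddCommGroup M₁] [Module R M₁]
    [AddCommGroup M₂] [Module R M₂] [AddCommGroup M₃] [Module R M₃] {f : M₁ →ₗ[R] M₂}
    {g : M₂ →ₗ[R] M₃} (hf : Function.Injective f) (hg : Function.Surjective g)
    (hfg : Function.Exact f g) {y : S} (h₁ : IsSMulRegular (N ⊗[R] M₁) y)
    (h₃ : IsSMulRegular (N ⊗[R] M₃) y) : IsSMulRegular (N ⊗[R] M₂) y := by
  refine isSMulRegular_of_range_eq_ker (f := AlgebraTensorModule.lTensor S N f)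
    (g := AlgebraTensorModule.lTensor S N g) (Module.Flat.lTensor_preserves_injective_linearMap f hf)
    ?_ h₁ h₃
  ext x
  exact (lTensor_exact N hfg hg x).symm

theorem tensor_quotient_subsingleton {N : Type u} [AddCommGroup N] [Module R N] [Module S N]
    [IsScalarTower R S N] {p : Ideal R} {a : R} (ha : a ∈ p) (hu : IsUnit (algebraMap R S a)) :
    Subsingleton (N ⊗[R] (R ⧸ p)) := by
  refine subsingleton_of_forall_eq 0 fun x ↦ ?_
  refine (hu.smul_eq_zero).mp ?_
  rw [algebraMap_smul S a x]
  induction x with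
  | zero => simp
  | tmul n m =>
    rw [← tmul_smul]
    obtain ⟨m, rfl⟩ := Ideal.Quotient.mk_surjective m
    have : a • Ideal.Quotient.mk p m = 0 := by
      rw [← Ideal.Quotient.mkₐ_eq_mk R, ← map_smul, Ideal.Quotient.mkₐ_eq_mk,
        Ideal.Quotient.eq_zero_iff_mem]
      exact p.mul_mem_right _ ha
    rw [this, tmul_zero]
  | add x z hx hz => rw [smul_add, hx, hz, add_zero]

theorem isSMulRegular_tensor_of_pow_smul_eq_bot [IsNoetherianRing R] [IsLocalRing S]
    {P : Ideal R} (hP : (IsLocalRing.maximalIdeal S).comap (algebraMap R S) = P)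
    {N : Type u} [AddCommGroup N] [Module R N] [Module S N] [IsScalarTower R S N]
    [Module.Flat R N] {y : S} (hy : IsSMulRegular (N ⊗[R] (R ⧸ P)) y)
    (M : Type u) [AddCommGroup M] [Module R M] [Module.Finite R M] (n : ℕ)
    (hM : ∀ a ∈ P ^ n, ∀ m : M, a • m = 0) : IsSMulRegular (N ⊗[R] M) y := by
  induction ‹Module.Finite R M› using IsNoetherianRing.induction_on_isQuotientEquivQuotientPrime R with
  | subsingleton M =>
    have : Subsingleton (N ⊗[R] M) := inferInstance
    exact fun x z _ ↦ Subsingleton.elim x z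
  | quotient M p e =>
    rw [(AlgebraTensorModule.congr (LinearEquiv.refl S N) e).isSMulRegular_congr]
    have hle : P ≤ p.asIdeal := by
      refine p.2.le_of_pow_le (n := n) fun a ha ↦ ?_
      have := congr_arg e (hM a ha (e.symm 1))
      rw [map_smul, e.apply_symm_apply, map_zero, ← map_one (Ideal.Quotient.mk _),
        ← Ideal.Quotient.mkₐ_eq_mk R, ← map_smul, Ideal.Quotient.mkₐ_eq_mk,
        Ideal.Quotient.eq_zero_iff_mem] at this
      simpa using this
    obtain heq | hlt := hle.eq_or_lt
    · rwa [← heq]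
    · obtain ⟨a, hap, haP⟩ := SetLike.exists_of_lt hlt
      have := tensor_quotient_subsingleton (S := S) (N := N) hap (by
        by_contra hnu
        exact haP (hP ▸ (IsLocalRing.mem_maximalIdeal _).mpr hnu))
      exact fun x z _ ↦ Subsingleton.elim x z
  | exact M₁ M₂ M₃ f g hf hg hfg h₁ h₃ =>
    refine isSMulRegular_tensor_of_exact hf hg hfg (h₁ fun a ha m ↦ hf ?_) (h₃ fun a ha m ↦ ?_)
    · rw [map_smul, hM a ha, map_zero]
    · obtain ⟨m, rfl⟩ := hg m
      rw [← map_smul, hM a ha, map_zero]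

theorem finite_tensor (N : Type u) [AddCommGroup N] [Module R N] [Module S N]
    [IsScalarTower R S N] [Module.Finite S N] (M : Type v) [AddCommGroup M] [Module R M]
    [Module.Finite R M] : Module.Finite S (N ⊗[R] M) :=
  Module.Finite.equiv (AlgebraTensorModule.cancelBaseChange R S S N M)

theorem isSMulRegular_tensor_of_isLocalRing [IsNoetherianRing R] [IsLocalRing S]
    [IsNoetherianRing S] {P : Ideal R}
    (hP : (IsLocalRing.maximalIdeal S).comap (algebraMap R S) = P)
    {N : Type u} [AddCommGroup N] [Module R N] [Module S N] [IsScalarTower R S N]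
    [Module.Flat R N] [Module.Finite S N] {y : S} (hy : IsSMulRegular (N ⊗[R] (R ⧸ P)) y)
    (M : Type u) [AddCommGroup M] [Module R M] [Module.Finite R M] :
    IsSMulRegular (N ⊗[R] M) y := by
  rw [isSMulRegular_iff_right_eq_zero_of_smul]
  intro x hx
  have := finite_tensor (R := R) (S := S) N M
  have hbot := Ideal.iInf_pow_smul_eq_bot_of_isLocalRing (M := N ⊗[R] M)
    (IsLocalRing.maximalIdeal S) (Ideal.IsPrime.ne_top inferInstance)
  rw [← Submodule.mem_bot S, ← hbot, Submodule.mem_iInf]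
  intro n
  let K : Submodule R M := P ^ n • ⊤
  have hreg : IsSMulRegular (N ⊗[R] (M ⧸ K)) y :=
    isSMulRegular_tensor_of_pow_smul_eq_bot hP hy (M ⧸ K) n (by
      intro a ha m
      obtain ⟨m, rfl⟩ := K.mkQ_surjective m
      rw [← map_smul, Submodule.mkQ_apply, Submodule.Quotient.mk_eq_zero]
      exact Submodule.smul_mem_smul ha trivial)
  have h0 : AlgebraTensorModule.lTensor S N K.mkQ x = 0 := by
    refine hreg.right_eq_zero_of_smul ?_
    rw [← map_smul, hx, map_zero]
  obtain ⟨z, rfl⟩ := (lTensor_exact N (LinearMap.exact_subtype_mkQ K) K.mkQ_surjective x).mp h0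
  clear hx h0
  induction z with
  | zero => simp
  | add a b ha hb => rw [map_add]; exact add_mem ha hb
  | tmul a b =>
    obtain ⟨b, hb⟩ := b
    rw [LinearMap.lTensor_tmul, Submodule.subtype_apply]
    refine Submodule.smul_induction_on
      (p := fun m ↦ a ⊗ₜ[R] m ∈ (IsLocalRing.maximalIdeal S) ^ n • (⊤ : Submodule S (N ⊗[R] M)))
      hb ?_ ?_
    · intro r hr m _
      rw [tmul_smul, ← algebraMap_smul S r (a ⊗ₜ[R] m)]
      refine Submodule.smul_mem_smul ?_ trivial
      refine Ideal.pow_right_mono (Ideal.map_le_iff_le_comap.mpr hP.ge) n ?_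
      rw [← Ideal.map_pow]
      exact Ideal.mem_map_of_mem _ hr
    · intro c d hc hd
      rw [tmul_add]
      exact add_mem hc hd

theorem flat_quotSMulTop {N : Type u} [AddCommGroup N] [Module R N] [Module S N]
    [IsScalarTower R S N] [Module.Flat R N] {y : S}
    (hy : ∀ I : Ideal R, I.FG → IsSMulRegular (N ⊗[R] (R ⧸ I)) y) :
    Module.Flat R (QuotSMulTop y N) := by
  rw [Module.Flat.iff_lTensor_injective]
  intro I hI
  rw [injective_iff_map_eq_zero]
  intro z hz
  obtain ⟨w, rfl⟩ := LinearMap.rTensor_surjective I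
    (g := (Submodule.mkQ (y • (⊤ : Submodule S N))).restrictScalars R)
    (Submodule.mkQ_surjective (y • (⊤ : Submodule S N))) z
  have hinj : Function.Injective (LinearMap.lTensor N I.subtype) :=
    Module.Flat.lTensor_preserves_injective_linearMap _ Subtype.val_injective
  rw [← LinearMap.comp_apply, LinearMap.lTensor_comp_rTensor, ← LinearMap.rTensor_comp_lTensor,
    LinearMap.comp_apply] at hz
  obtain ⟨v, hv⟩ := (rTensor_mk_exact_smul y).mp hz
  have hex := lTensor_exact N (LinearMap.exact_subtype_mkQ I) I.mkQ_surjective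
  have h0 : AlgebraTensorModule.lTensor S N I.mkQ v = 0 := by
    refine (hy I hI).right_eq_zero_of_smul ?_
    rw [← map_smul, hv]
    exact (hex _).mpr ⟨w, rfl⟩
  obtain ⟨v', rfl⟩ := (hex v).mp h0
  refine (rTensor_mk_exact_smul y).mpr ⟨v', hinj ?_⟩
  rw [← hv]
  exact map_smul (AlgebraTensorModule.lTensor S N I.subtype) y v'

theorem isWeaklyRegular_tensor_of_isLocalRing [IsNoetherianRing R] [IsLocalRing S]
    [IsNoetherianRing S] {P : Ideal R}
    (hP : (IsLocalRing.maximalIdeal S).comap (algebraMap R S) = P)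
    {N : Type u} [AddCommGroup N] [Module R N] [Module S N] [IsScalarTower R S N]
    [Module.Flat R N] [Module.Finite S N] {ys : List S}
    (hy : IsWeaklyRegular (N ⊗[R] (R ⧸ P)) ys)
    (M : Type u) [AddCommGroup M] [Module R M] [Module.Finite R M] :
    IsWeaklyRegular (N ⊗[R] M) ys := by
  induction ys generalizing N with
  | nil => exact IsWeaklyRegular.nil _ _
  | cons y ys ih =>
    rw [isWeaklyRegular_cons_iff] at hy ⊢
    refine ⟨isSMulRegular_tensor_of_isLocalRing hP hy.1 M, ?_⟩
    rw [(quotSMulTopTensorEquiv N y M).isWeaklyRegular_congr]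
    have : Module.Flat R (QuotSMulTop y N) :=
      flat_quotSMulTop fun I _ ↦ isSMulRegular_tensor_of_isLocalRing hP hy.1 (R ⧸ I)
    exact ih ((quotSMulTopTensorEquiv N y (R ⧸ P)).isWeaklyRegular_congr _ |>.mp hy.2)

theorem isWeaklyRegular_tensor_append {N : Type u} [AddCommGroup N] [Module R N] [Module S N]
    [IsScalarTower R S N] [Module.Flat R N] {ys : List S}
    (hy : ∀ (M : Type u) [AddCommGroup M] [Module R M] [Module.Finite R M],
      IsWeaklyRegular (N ⊗[R] M) ys)
    {M : Type u} [AddCommGroup M] [Module R M] [Module.Finite R M] {rs : List R}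
    (hr : IsWeaklyRegular M rs) :
    IsWeaklyRegular (N ⊗[R] M) (rs.map (algebraMap R S) ++ ys) := by
  induction rs generalizing M with
  | nil => exact hy M
  | cons r rs ih =>
    rw [isWeaklyRegular_cons_iff] at hr
    rw [List.map_cons, List.cons_append, isWeaklyRegular_cons_iff]
    refine ⟨?_, ?_⟩
    · intro a b hab
      refine (hr.1.lTensor N) ?_
      change r • a = r • b
      rw [← algebraMap_smul S r a, ← algebraMap_smul S r b]
      exact hab
    · rw [(quotSMulTopTensorEquivRight N r M).isWeaklyRegular_congr]
      exact ih hr.2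

end FlatTensor

section SurjectiveTransport

variable {R : Type u} [CommRing R] {S : Type u} [CommRing S] {X : Type v} [AddCommGroup X]
  [Module R X] {Y : Type w} [AddCommGroup Y] [Module S Y] {f : R →+* S} {e : X ≃+ Y}

theorem supportDim_le_of_surjective_of_addEquiv (hf : Function.Surjective f)
    (he : ∀ r x, e (r • x) = f r • e x) : supportDim R X ≤ supportDim S Y := by
  have key : ∀ p ∈ Module.support R X, RingHom.ker f ≤ p.asIdeal := by
    intro p hp r hr
    obtain ⟨x, hx⟩ := Module.mem_support_iff'.mp hp
    by_contra hrp
    refine hx r hrp (e.injective ?_)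
    rw [he, (RingHom.mem_ker).mp hr, zero_smul, map_zero]
  have hcomap : ∀ p ∈ Module.support R X, (p.asIdeal.map f).comap f = p.asIdeal := by
    intro p hp
    rw [Ideal.comap_map_of_surjective' f hf, sup_eq_left.mpr (key p hp)]
  refine Order.krullDim_le_of_strictMono (fun p ↦ ⟨⟨p.1.asIdeal.map f,
    Ideal.map_isPrime_of_surjective hf (key p.1 p.2)⟩, ?_⟩) ?_
  · obtain ⟨x, hx⟩ := Module.mem_support_iff'.mp p.2
    refine Module.mem_support_iff'.mpr ⟨e x, fun s hs h0 ↦ ?_⟩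
    obtain ⟨r, rfl⟩ := hf s
    rw [← he, map_eq_zero_iff e e.injective] at h0
    exact hx r (fun hr ↦ hs (Ideal.mem_map_of_mem f hr)) h0
  · intro p q hpq
    have hle : p.1.asIdeal.map f ≤ q.1.asIdeal.map f := Ideal.map_mono hpq.le
    refine lt_of_le_of_ne hle fun heq ↦ hpq.ne ?_
    have h := congr_arg (fun z : Module.support S Y ↦ z.1.asIdeal.comap f) heq
    simp only [hcomap p.1 p.2, hcomap q.1 q.2] at h
    exact Subtype.ext (PrimeSpectrum.ext h)

theorem exists_isWeaklyRegular_of_surjective_of_addEquiv [IsLocalRing R] [IsLocalRing S]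
    (hf : Function.Surjective f)
    (he : ∀ r x, e (r • x) = f r • e x) {rs : List S}
    (hmem : ∀ r ∈ rs, r ∈ IsLocalRing.maximalIdeal S)
    (hreg : RingTheory.Sequence.IsWeaklyRegular Y rs) :
    ∃ rs' : List R, rs'.length = rs.length ∧ (∀ r ∈ rs', r ∈ IsLocalRing.maximalIdeal R) ∧
      RingTheory.Sequence.IsWeaklyRegular X rs' := by
  obtain ⟨rs', rfl⟩ := List.map_surjective_iff.mpr hf rs
  refine ⟨rs', by simp, fun r hr ↦ ?_, ?_⟩
  · have := hmem (f r) (List.mem_map_of_mem hr)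
    rw [IsLocalRing.mem_maximalIdeal, mem_nonunits_iff] at this ⊢
    exact fun hu ↦ this (hu.map f)
  · refine (AddEquiv.isWeaklyRegular_congr (e := e) ?_).mpr hreg
    exact List.forall₂_map_right_iff.mpr (List.forall₂_same.mpr fun r _ x ↦ he r x)

end SurjectiveTransport

section LocalizationTransport

variable {R : Type u} [CommRing R] {C : Type u} [CommRing C] [Algebra R C]
  {F : Type u} [AddCommGroup F] [Module R F] {G : Type u} [AddCommGroup G] [Module R G]
  [Module C G] [IsScalarTower R C G] {T : Submonoid R}

/-- If every element of `C` is a fraction with denominator in `T`, and `G` is the localization of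
`F` at `T`, then the local ring of `C` at a prime is a quotient of the local ring of `R` below,
and the localizations of `F` and `G` at these primes agree. -/
theorem exists_surjective_addEquiv_localizedModule (hT : ∀ t ∈ T, IsUnit (algebraMap R C t))
    (hC : ∀ c : C, ∃ t ∈ T, ∃ b, algebraMap R C t * c = algebraMap R C b) (φ : F →ₗ[R] G)
    [IsLocalizedModule T φ] (q : PrimeSpectrum C) {Q : PrimeSpectrum R}
    (hQ : Q = PrimeSpectrum.comap (algebraMap R C) q) :
    ∃ (f : Localization.AtPrime Q.asIdeal →+* Localization.AtPrime q.asIdeal)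
      (e : LocalizedModule Q.asIdeal.primeCompl F ≃+ LocalizedModule q.asIdeal.primeCompl G),
      Function.Surjective f ∧ ∀ r x, e (r • x) = f r • e x := by
  subst hQ
  set Q := PrimeSpectrum.comap (algebraMap R C) q with hQdef
  let W := LocalizedModule q.asIdeal.primeCompl G
  let Cq := Localization.AtPrime q.asIdeal
  have hsmul : ∀ (r : R) (x : W), r • x = algebraMap R C r • x := fun r x ↦
    (algebraMap_smul C r x).symm
  have hQmem : ∀ r : R, r ∈ Q.asIdeal ↔ algebraMap R C r ∈ q.asIdeal := fun _ ↦ Iff.rfl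
  have hTQ : ∀ t ∈ T, t ∉ Q.asIdeal := fun t ht h ↦
    q.2.ne_top (Ideal.eq_top_of_isUnit_mem _ h (hT t ht))
  let ψ : F →ₗ[R] W :=
    { toFun := fun x ↦ LocalizedModule.mk (φ x) 1
      map_add' := fun x y ↦ by rw [map_add, LocalizedModule.mk_add_mk]; simp
      map_smul' := fun r x ↦ by
        rw [RingHom.id_apply, hsmul, LocalizedModule.smul'_mk, map_smul, algebraMap_smul] }
  have hψ : ∀ x, ψ x = LocalizedModule.mk (φ x) 1 := fun _ ↦ rfl
  have hunit : ∀ c : C, c ∉ q.asIdeal → Function.Bijective fun x : W ↦ c • x := by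
    intro c hc
    have := (Module.End.isUnit_iff _).mp (IsLocalizedModule.map_units
      (S := q.asIdeal.primeCompl) (LocalizedModule.mkLinearMap q.asIdeal.primeCompl G) ⟨c, hc⟩)
    exact this
  have hloc : IsLocalizedModule Q.asIdeal.primeCompl ψ := by
    refine ⟨fun x ↦ (Module.End.isUnit_iff _).mpr ?_, fun w ↦ ?_, fun {x y} hxy ↦ ?_⟩
    · convert hunit _ x.2 using 2 with w
      exact hsmul x w
    · induction w using LocalizedModule.induction_on with
      | h g c =>
        obtain ⟨⟨n, s⟩, hs⟩ := IsLocalizedModule.surj T φ g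
        obtain ⟨t, ht, b, hb⟩ := hC c
        have hbQ : b ∉ Q.asIdeal := by
          rw [hQmem, ← hb]
          exact fun h ↦ (q.2.mem_or_mem h).elim (hTQ t ht) c.2
        refine ⟨⟨t • n, ⟨s * b, Q.asIdeal.primeCompl.mul_mem (hTQ s s.2) hbQ⟩⟩, ?_⟩
        rw [Submonoid.smul_def]
        dsimp only
        rw [hψ, hsmul, map_mul, ← hb, LocalizedModule.smul'_mk, map_smul, ← hs,
          LocalizedModule.mk_eq]
        refine ⟨1, ?_⟩
        simp only [one_smul, Submonoid.smul_def]
        rw [← algebraMap_smul C t, ← algebraMap_smul C (s : R) g, ← mul_smul, ← mul_smul]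
        congr 1
        ring
    · rw [hψ, hψ, LocalizedModule.mk_eq] at hxy
      obtain ⟨c, hc⟩ := hxy
      obtain ⟨t, ht, b, hb⟩ := hC c
      have hbQ : b ∉ Q.asIdeal := by
        rw [hQmem, ← hb]
        exact fun h ↦ (q.2.mem_or_mem h).elim (hTQ t ht) c.2
      have h1 : φ (b • x) = φ (b • y) := by
        simp only [one_smul, Submonoid.smul_def] at hc
        rw [map_smul, map_smul, ← algebraMap_smul C b, ← algebraMap_smul C b (φ y), ← hb,
          mul_smul, mul_smul, hc]
      obtain ⟨s, hs⟩ := IsLocalizedModule.exists_of_eq (S := T) h1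
      refine ⟨⟨s * b, Q.asIdeal.primeCompl.mul_mem (hTQ s s.2) hbQ⟩, ?_⟩
      simpa [Submonoid.smul_def, mul_smul] using hs
  let f : Localization.AtPrime Q.asIdeal →+* Cq :=
    Localization.localRingHom Q.asIdeal q.asIdeal (algebraMap R C) rfl
  have hf : ∀ r : R, f (algebraMap R _ r) = algebraMap C Cq (algebraMap R C r) := fun r ↦
    Localization.localRingHom_to_map _ _ _ _ r
  let e := IsLocalizedModule.iso Q.asIdeal.primeCompl ψ
  refine ⟨f, e.toAddEquiv, ?_, ?_⟩
  · intro z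
    obtain ⟨c, d, rfl⟩ := IsLocalization.exists_mk'_eq q.asIdeal.primeCompl z
    obtain ⟨t, ht, b, hb⟩ := hC c
    obtain ⟨t', ht', b', hb'⟩ := hC d
    have hbQ : b' ∉ Q.asIdeal := by
      rw [hQmem, ← hb']
      exact fun h ↦ (q.2.mem_or_mem h).elim (hTQ t' ht') d.2
    let s : Q.asIdeal.primeCompl := ⟨t * b', Q.asIdeal.primeCompl.mul_mem (hTQ t ht) hbQ⟩
    refine ⟨IsLocalization.mk' _ (b * t') s, ?_⟩
    have hs : IsUnit (f (algebraMap R _ s)) :=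
      (IsLocalization.map_units (Localization.AtPrime Q.asIdeal) s).map f
    refine hs.mul_left_cancel ?_
    rw [← map_mul, IsLocalization.mk'_spec', hf, hf]
    have hd := IsLocalization.mk'_spec' Cq c d
    simp only [s, map_mul, ← hb, ← hb']
    rw [← hd]
    ring
  · intro r x
    obtain ⟨a, s, rfl⟩ := IsLocalization.exists_mk'_eq Q.asIdeal.primeCompl r
    refine (hunit _ ((hQmem s).not.mp s.2)).1 ?_
    have hl : ∀ (b : R) (y : LocalizedModule Q.asIdeal.primeCompl F),
        e (algebraMap R (Localization.AtPrime Q.asIdeal) b • y) = algebraMap R C b • e y := by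
      intro b y
      rw [algebraMap_smul, map_smul, hsmul]
    change algebraMap R C s • e _ = algebraMap R C s • _
    rw [← hl, ← mul_smul, IsLocalization.mk'_spec', hl, ← algebraMap_smul Cq (algebraMap R C s),
      ← mul_smul, ← hf, ← map_mul, IsLocalization.mk'_spec', hf]
    exact (algebraMap_smul Cq (algebraMap R C a) (e x)).symm

theorem heightAt_le_of_isLocalizedModule (hT : ∀ t ∈ T, IsUnit (algebraMap R C t))
    (hC : ∀ c : C, ∃ t ∈ T, ∃ b, algebraMap R C t * c = algebraMap R C b) (φ : F →ₗ[R] G)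
    [IsLocalizedModule T φ] (q : PrimeSpectrum C) {Q : PrimeSpectrum R}
    (hQ : Q = PrimeSpectrum.comap (algebraMap R C) q) :
    heightAt R F Q ≤ heightAt C G q := by
  obtain ⟨f, e, hf, he⟩ := exists_surjective_addEquiv_localizedModule hT hC φ q hQ
  exact supportDim_le_of_surjective_of_addEquiv hf he

theorem mem_support_of_isLocalizedModule (hT : ∀ t ∈ T, IsUnit (algebraMap R C t))
    (hC : ∀ c : C, ∃ t ∈ T, ∃ b, algebraMap R C t * c = algebraMap R C b) (φ : F →ₗ[R] G)
    [IsLocalizedModule T φ] (q : PrimeSpectrum C) {Q : PrimeSpectrum R}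
    (hQ : Q = PrimeSpectrum.comap (algebraMap R C) q) (hQF : Q ∈ Module.support R F) :
    q ∈ Module.support C G := by
  obtain ⟨f, e, hf, he⟩ := exists_surjective_addEquiv_localizedModule hT hC φ q hQ
  have : Nontrivial (LocalizedModule Q.asIdeal.primeCompl F) := hQF
  exact e.symm.toEquiv.nontrivial

theorem depthAt_le_of_isLocalizedModule (hT : ∀ t ∈ T, IsUnit (algebraMap R C t))
    (hC : ∀ c : C, ∃ t ∈ T, ∃ b, algebraMap R C t * c = algebraMap R C b) (φ : F →ₗ[R] G)
    [IsLocalizedModule T φ] (q : PrimeSpectrum C) {Q : PrimeSpectrum R}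
    (hQ : Q = PrimeSpectrum.comap (algebraMap R C) q) [Module.Finite R F]
    (hQF : Q ∈ Module.support R F) :
    depthAt C G q ≤ depthAt R F Q := by
  obtain ⟨f, e, hf, he⟩ := exists_surjective_addEquiv_localizedModule hT hC φ q hQ
  refine sSup_le ?_
  rintro _ ⟨rs, rfl, hmem, hreg⟩
  obtain ⟨rs', hlen, hmem', hreg'⟩ :=
    exists_isWeaklyRegular_of_surjective_of_addEquiv hf he hmem hreg.toIsWeaklyRegular
  exact (natCast_le_depthAt_iff hQF _).mpr ⟨rs', hlen, hmem', hreg'⟩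

end LocalizationTransport

section Fiber

/-- Cohen-Macaulayness of `T⁻¹N / I T⁻¹N` controls the localizations of `N / I N` at the primes
disjoint from `T`. -/
theorem heightAt_le_depthAt_of_isCMModule_localizedModule {R : Type u} [CommRing R] {T : Submonoid R}
    {I : Ideal R} {J : Ideal (Localization T)} (hJ : J = I.map (algebraMap R (Localization T)))
    {X : Type u} [AddCommGroup X] [Module R X] [Module.Finite R X]
    (h : IsCMModule (Localization T ⧸ J) (LocalizedModule T X ⧸
      (J • (⊤ : Submodule (Localization T) (LocalizedModule T X)))))
    {Q : PrimeSpectrum R} (hdisj : Disjoint (T : Set R) Q.asIdeal)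
    (hQ : Q ∈ Module.support R (X ⧸ (I • ⊤ : Submodule R X))) :
    heightAt R (X ⧸ (I • ⊤ : Submodule R X)) Q ≤
      (depthAt R (X ⧸ (I • ⊤ : Submodule R X)) Q : WithBot ℕ∞) := by
  subst hJ
  set J := I.map (algebraMap R (Localization T)) with hJ
  let φ : (X ⧸ (I • ⊤ : Submodule R X)) →ₗ[R] (LocalizedModule T X ⧸
      (J • (⊤ : Submodule (Localization T) (LocalizedModule T X)))) :=
    ((localizedModuleQuotientEquiv X T I).toLinearMap.restrictScalars R) ∘ₗ
      LocalizedModule.mkLinearMap T _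
  have hφ : IsLocalizedModule T φ :=
    IsLocalizedModule.of_linearEquiv T (LocalizedModule.mkLinearMap T _)
      ((localizedModuleQuotientEquiv X T I).restrictScalars R)
  have hIQ : I ≤ Q.asIdeal := by
    rw [Module.mem_support_iff_exists_annihilator] at hQ
    obtain ⟨x, hx⟩ := hQ
    intro r hr
    refine hx ?_
    rw [Submodule.mem_annihilator_span_singleton]
    obtain ⟨x, rfl⟩ := Submodule.Quotient.mk_surjective _ x
    rw [← Submodule.Quotient.mk_smul, Submodule.Quotient.mk_eq_zero]
    exact Submodule.smul_mem_smul hr trivial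
  have hT : ∀ t ∈ T, IsUnit (algebraMap R (Localization T ⧸ J) t) := fun t ht ↦ by
    rw [IsScalarTower.algebraMap_apply R (Localization T)]
    exact (IsLocalization.map_units (Localization T) ⟨t, ht⟩).map _
  have hC : ∀ c : Localization T ⧸ J, ∃ t ∈ T, ∃ b,
      algebraMap R (Localization T ⧸ J) t * c = algebraMap R (Localization T ⧸ J) b := by
    intro c
    obtain ⟨c, rfl⟩ := Ideal.Quotient.mk_surjective c
    obtain ⟨⟨b, t⟩, hbt⟩ := IsLocalization.surj T c
    refine ⟨t, t.2, b, ?_⟩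
    rw [IsScalarTower.algebraMap_apply R (Localization T),
      IsScalarTower.algebraMap_apply R (Localization T) _ b, ← hbt, mul_comm, map_mul]
    rfl
  obtain ⟨q, hq⟩ : ∃ q : PrimeSpectrum (Localization T ⧸ J),
      Q = PrimeSpectrum.comap (algebraMap R (Localization T ⧸ J)) q := by
    have hmem : Q ∈ Set.range (PrimeSpectrum.comap (algebraMap R (Localization T))) := by
      rw [PrimeSpectrum.localization_comap_range _ T]
      exact hdisj
    obtain ⟨q', rfl⟩ := hmem
    have hmem : q' ∈ Set.range (PrimeSpectrum.comap (Ideal.Quotient.mk J)) := by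
      rw [range_comap_of_surjective _ _ Ideal.Quotient.mk_surjective,
        Ideal.mk_ker, PrimeSpectrum.mem_zeroLocus, SetLike.coe_subset_coe, hJ,
        Ideal.map_le_iff_le_comap]
      exact hIQ
    obtain ⟨q, rfl⟩ := hmem
    exact ⟨q, rfl⟩
  calc _ ≤ _ := heightAt_le_of_isLocalizedModule hT hC φ q hq
    _ = _ := (h q (mem_support_of_isLocalizedModule hT hC φ q hq hQ)).symm
    _ ≤ _ := by exact_mod_cast depthAt_le_of_isLocalizedModule hT hC φ q hq hQ

theorem heightAt_le_depthAt_of_isCMModule_fiberModule {R S : Type u} [CommRing R] [CommRing S]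
    [Algebra R S] {N : Type u} [AddCommGroup N] [Module S N] [Module.Finite S N]
    {P : PrimeSpectrum R} (h : IsCMModule (fiberRing R S P) (fiberModule R S P N))
    {Q : PrimeSpectrum S} (hQP : PrimeSpectrum.comap (algebraMap R S) Q = P)
    (hQ : Q ∈ Module.support S (N ⧸ (P.asIdeal.map (algebraMap R S) • ⊤ : Submodule S N))) :
    heightAt S (N ⧸ (P.asIdeal.map (algebraMap R S) • ⊤ : Submodule S N)) Q ≤
      (depthAt S (N ⧸ (P.asIdeal.map (algebraMap R S) • ⊤ : Submodule S N)) Q : WithBot ℕ∞) := by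
  refine heightAt_le_depthAt_of_isCMModule_localizedModule (T := fiberSubmonoid R S P)
    (J := fiberIdeal R S P) (Ideal.map_map _ _).symm h ?_ hQ
  rw [Set.disjoint_left]
  rintro _ ⟨a, ha, rfl⟩ haQ
  subst hQP
  exact ha haQ

end Fiber

section Dimension

theorem heightAt_comap_le_height {R S : Type u} [CommRing R] [CommRing S] {f : R →+* S}
    (hf : Function.Surjective f) {X : Type u} [AddCommGroup X] [Module R X]
    (hX : Module.support R X ⊆ PrimeSpectrum.zeroLocus (RingHom.ker f))
    {q : PrimeSpectrum S} (hq : PrimeSpectrum.comap f q ∈ Module.support R X) :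
    heightAt R X (PrimeSpectrum.comap f q) ≤ (q.asIdeal.height : WithBot ℕ∞) := by
  rw [← range_comap_of_surjective _ f hf] at hX
  choose g hg using fun p : Module.support R X ↦ hX p.2
  have hle : ∀ p p', g p ≤ g p' ↔ p ≤ p' := fun p p' ↦ by
    rw [← Subtype.coe_le_coe, ← hg p, ← hg p']
    exact (Ideal.comap_le_comap_iff_of_surjective f hf _ _).symm
  have hmono : StrictMono g := fun p p' hpp' ↦ by
    rw [lt_iff_le_not_ge, hle, hle]
    exact lt_iff_le_not_ge.mp hpp'
  have hgq : g ⟨_, hq⟩ = q := PrimeSpectrum.comap_injective_of_surjective f hf (hg ⟨_, hq⟩)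
  rw [heightAt_eq_height hq]
  conv_rhs => rw [← hgq]
  rw [PrimeSpectrum.height_eq_orderHeight]
  exact_mod_cast Order.height_le_height_apply_of_strictMono g hmono _

theorem height_le_heightAt_comap {R S : Type u} [CommRing R] [CommRing S] {f : R →+* S}
    (hf : Function.Surjective f) {X : Type u} [AddCommGroup X] [Module R X]
    (hX : PrimeSpectrum.zeroLocus (RingHom.ker f) ⊆ Module.support R X) (q : PrimeSpectrum S) :
    (q.asIdeal.height : WithBot ℕ∞) ≤ heightAt R X (PrimeSpectrum.comap f q) := by
  rw [← range_comap_of_surjective _ f hf] at hX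
  rw [heightAt_eq_height (hX ⟨q, rfl⟩), PrimeSpectrum.height_eq_orderHeight]
  exact_mod_cast Order.height_le_height_apply_of_strictMono
    (fun q' : PrimeSpectrum S ↦ (⟨PrimeSpectrum.comap f q', hX ⟨q', rfl⟩⟩ : Module.support R X))
    (fun _ _ h ↦ RingHom.strictMono_comap_of_surjective hf h) q

/-- The dimension inequality for the fibers of `R → S`, for modules. -/
theorem heightAt_le_heightAt_add_heightAt {R S : Type u} [CommRing R] [CommRing S]
    [IsNoetherianRing S] [Algebra R S] [IsNoetherianRing R]
    {M : Type u} [AddCommGroup M] [Module R M] [Module.Finite R M]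
    {N : Type u} [AddCommGroup N] [Module S N] [Module.Finite S N]
    {X : Type u} [AddCommGroup X] [Module S X]
    (hXN : Module.annihilator S N ≤ Module.annihilator S X)
    (hXM : (Module.annihilator R M).map (algebraMap R S) ≤ Module.annihilator S X)
    {Q : PrimeSpectrum S} (hQ : Q ∈ Module.support S X) {P : PrimeSpectrum R}
    (hQP : PrimeSpectrum.comap (algebraMap R S) Q = P) :
    heightAt S X Q ≤ heightAt R M P +
      heightAt S (N ⧸ (P.asIdeal.map (algebraMap R S) • ⊤ : Submodule S N)) Q := by
  set I := Module.annihilator R M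
  set J := Module.annihilator S N ⊔ I.map (algebraMap R S) with hJ
  have hIJ : I ≤ J.comap (algebraMap R S) := by
    rw [← Ideal.map_le_iff_le_comap]
    exact le_sup_right
  let _ : Algebra (R ⧸ I) (S ⧸ J) := (Ideal.quotientMap J (algebraMap R S) hIJ).toAlgebra
  have halg : ∀ r : R, algebraMap (R ⧸ I) (S ⧸ J) (Ideal.Quotient.mk I r) =
      Ideal.Quotient.mk J (algebraMap R S r) := fun r ↦ rfl
  have hXJ : Module.support S X ⊆ PrimeSpectrum.zeroLocus (J : Set S) := fun p hp ↦
    (sup_le hXN hXM).trans (Module.annihilator_le_of_mem_support hp)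
  obtain ⟨Q', hQ'⟩ : ∃ Q', PrimeSpectrum.comap (Ideal.Quotient.mk J) Q' = Q := by
    have := hXJ hQ
    rwa [← Ideal.mk_ker (I := J), ← range_comap_of_surjective _ _
      Ideal.Quotient.mk_surjective] at this
  let P' := PrimeSpectrum.comap (algebraMap (R ⧸ I) (S ⧸ J)) Q'
  have hP' : PrimeSpectrum.comap (Ideal.Quotient.mk I) P' = P := by
    rw [← hQP, ← hQ']
    rfl
  have : Q'.asIdeal.LiesOver P'.asIdeal := ⟨rfl⟩
  let K := P'.asIdeal.map (algebraMap (R ⧸ I) (S ⧸ J))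
  obtain ⟨Q'', hQ''⟩ : ∃ Q'', PrimeSpectrum.comap (Ideal.Quotient.mk K) Q'' = Q' := by
    have : Q' ∈ PrimeSpectrum.zeroLocus (K : Set (S ⧸ J)) := by
      exact Ideal.map_le_iff_le_comap.mpr le_rfl
    rwa [← Ideal.mk_ker (I := K), ← range_comap_of_surjective _ _
      Ideal.Quotient.mk_surjective] at this
  have hQmap : Q'.asIdeal.map (Ideal.Quotient.mk K) = Q''.asIdeal := by
    rw [← hQ'']
    exact Ideal.map_comap_of_surjective _ Ideal.Quotient.mk_surjective _
  have hheight := Ideal.height_le_height_add_of_liesOver P'.asIdeal Q'.asIdeal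
  change _ ≤ _ + (Q'.asIdeal.map (Ideal.Quotient.mk K)).height at hheight
  rw [hQmap] at hheight
  have h₁ : heightAt S X Q ≤ Q'.asIdeal.height := by
    subst hQ'
    exact heightAt_comap_le_height Ideal.Quotient.mk_surjective (by rwa [Ideal.mk_ker]) hQ
  have h₂ : (P'.asIdeal.height : WithBot ℕ∞) ≤ heightAt R M P := by
    rw [← hP']
    refine height_le_heightAt_comap Ideal.Quotient.mk_surjective ?_ P'
    rw [Ideal.mk_ker, Module.support_eq_zeroLocus]
  have h₃ : (Q''.asIdeal.height : WithBot ℕ∞) ≤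
      heightAt S (N ⧸ (P.asIdeal.map (algebraMap R S) • ⊤ : Submodule S N)) Q := by
    have hcomp : PrimeSpectrum.comap ((Ideal.Quotient.mk K).comp (Ideal.Quotient.mk J)) Q'' = Q := by
      rw [← hQ', ← hQ'']
      rfl
    rw [← hcomp]
    refine height_le_heightAt_comap
      (f := (Ideal.Quotient.mk K).comp (Ideal.Quotient.mk J))
      (Ideal.Quotient.mk_surjective (I := K) |>.comp Ideal.Quotient.mk_surjective) ?_ Q''
    rw [Module.support_quotient, Module.support_eq_zeroLocus]
    refine Set.subset_inter (PrimeSpectrum.zeroLocus_anti_mono_ideal fun s hs ↦ ?_)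
      (PrimeSpectrum.zeroLocus_anti_mono_ideal (Ideal.map_le_iff_le_comap.mpr fun r hr ↦ ?_))
    · rw [RingHom.mem_ker, RingHom.comp_apply,
        Ideal.Quotient.eq_zero_iff_mem.mpr (Ideal.mem_sup_left hs : s ∈ J), map_zero]
    · rw [Ideal.mem_comap, RingHom.mem_ker, RingHom.comp_apply, ← halg,
        Ideal.Quotient.eq_zero_iff_mem]
      refine Ideal.mem_map_of_mem _ ?_
      rw [← hP'] at hr
      exact hr
  calc heightAt S X Q ≤ Q'.asIdeal.height := h₁
    _ ≤ ((P'.asIdeal.height + Q''.asIdeal.height : ℕ∞) : WithBot ℕ∞) := by exact_mod_cast hheight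
    _ = (P'.asIdeal.height : WithBot ℕ∞) + Q''.asIdeal.height := by push_cast; rfl
    _ ≤ _ := add_le_add h₂ h₃

end Dimension

section Depth

attribute [local instance] tensorBaseModule

open RingTheory.Sequence

variable {R S : Type u} [CommRing R] [CommRing S] [Algebra R S]
  {N : Type u} [AddCommGroup N] [Module R N] [Module S N] [IsScalarTower R S N]

variable (N) in
/-- `N / I N ≃ N ⊗ R / I`, linearly over the algebra `S` acting on `N`. -/
def quotientMapSMulEquivTensor (I : Ideal R) :
    (N ⧸ (I.map (algebraMap R S) • ⊤ : Submodule S N)) ≃ₗ[S] N ⊗[R] (R ⧸ I) :=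
  Submodule.quotEquivOfEq _ _ (by
    ext n
    have h := TensorProduct.tensorQuotEquivQuotSMul_tmul_mk I n 1
    rw [one_smul, map_one] at h
    rw [LinearMap.mem_ker, ← Submodule.restrictScalars_mem R, Ideal.smul_restrictScalars,
      Submodule.restrictScalars_top, ← Submodule.Quotient.mk_eq_zero, ← h,
      LinearEquiv.map_eq_zero_iff]
    rfl) ≪≫ₗ
  LinearMap.quotKerEquivOfSurjective ((AlgebraTensorModule.mk R S N (R ⧸ I)).flip 1) (by
    intro x
    induction x with
    | zero => exact ⟨0, map_zero _⟩
    | tmul n r =>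
      obtain ⟨r, rfl⟩ := Ideal.Quotient.mk_surjective r
      refine ⟨r • n, ?_⟩
      change (r • n) ⊗ₜ[R] (1 : R ⧸ I) = _
      rw [TensorProduct.smul_tmul, Algebra.smul_def, mul_one]
      rfl
    | add x y hx hy =>
      obtain ⟨a, rfl⟩ := hx
      obtain ⟨b, rfl⟩ := hy
      exact ⟨a + b, map_add _ _ _⟩)

/-- The localization of `N ⊗ M` is `N_T ⊗ M`. -/
def localizedModuleEquivTensor (T : Submonoid S) {M : Type u} [AddCommGroup M] [Module R M]
    {X : Type u} [AddCommGroup X] [Module S X] (e : X ≃ₗ[S] N ⊗[R] M) :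
    LocalizedModule T X ≃ₗ[Localization T] LocalizedModule T N ⊗[R] M :=
  LinearEquiv.extendScalarsOfIsLocalization T (Localization T)
    (IsLocalizedModule.linearEquiv T (LocalizedModule.mkLinearMap T X)
      (AlgebraTensorModule.rTensor R M (LocalizedModule.mkLinearMap T N) ∘ₗ e.toLinearMap))

theorem flat_localizedModule [Module.Flat R N] (T : Submonoid S) :
    Module.Flat R (LocalizedModule T N) := by
  rw [Module.Flat.iff_lTensor_injective]
  intro I _
  have h := IsLocalizedModule.map_injective T
    (AlgebraTensorModule.rTensor R I (LocalizedModule.mkLinearMap T N))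
    (AlgebraTensorModule.rTensor R R (LocalizedModule.mkLinearMap T N))
    (AlgebraTensorModule.lTensor S N I.subtype)
    (Module.Flat.lTensor_preserves_injective_linearMap I.subtype I.injective_subtype)
  rw [IsLocalizedModule.map_lTensor] at h
  exact h

/-- The depth inequality for flat tensor products. -/
theorem depthAt_add_depthAt_le [IsNoetherianRing R] [IsNoetherianRing S]
    [Module.Flat R N] [Module.Finite S N] {M : Type u} [AddCommGroup M] [Module R M]
    [Module.Finite R M] {X : Type u} [AddCommGroup X] [Module S X] [Module.Finite S X]
    (e : X ≃ₗ[S] N ⊗[R] M) {P : PrimeSpectrum R} {Q : PrimeSpectrum S}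
    (hQP : PrimeSpectrum.comap (algebraMap R S) Q = P) (hP : P ∈ Module.support R M)
    (hM : idealDepth R P.asIdeal M = depthAt R M P)
    (hQ : Q ∈ Module.support S (N ⧸ (P.asIdeal.map (algebraMap R S) • ⊤ : Submodule S N)))
    (hX : Q ∈ Module.support S X) :
    depthAt R M P + depthAt S (N ⧸ (P.asIdeal.map (algebraMap R S) • ⊤ : Submodule S N)) Q ≤
      depthAt S X Q := by
  obtain ⟨m, hm⟩ := ENat.ne_top_iff_exists.mp (depthAt_ne_top hP)
  obtain ⟨n, hn⟩ := ENat.ne_top_iff_exists.mp (depthAt_ne_top hQ)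
  obtain ⟨rs, hlen, hmem, hreg⟩ :=
    (natCast_le_idealDepth_iff (smul_top_ne_top_of_mem_support hP) m).mp (hm.trans hM.symm).le
  obtain ⟨ys, hlen', hmem', hreg'⟩ := (natCast_le_depthAt_iff hQ n).mp hn.le
  rw [← hm, ← hn, ← Nat.cast_add, natCast_le_depthAt_iff hX]
  have hcomap : (IsLocalRing.maximalIdeal (Localization.AtPrime Q.asIdeal)).comap
      (algebraMap R (Localization.AtPrime Q.asIdeal)) = P.asIdeal := by
    rw [IsScalarTower.algebraMap_eq R S, ← Ideal.comap_comap, ← hQP]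
    exact congr_arg (Ideal.comap (algebraMap R S)) Localization.AtPrime.under_maximalIdeal
  have := flat_localizedModule (R := R) (N := N) Q.asIdeal.primeCompl
  have hy : IsWeaklyRegular (LocalizedModule Q.asIdeal.primeCompl N ⊗[R] (R ⧸ P.asIdeal)) ys :=
    (LinearEquiv.isWeaklyRegular_congr (localizedModuleEquivTensor Q.asIdeal.primeCompl
      (quotientMapSMulEquivTensor N P.asIdeal)) ys).mp hreg'
  refine ⟨rs.map (algebraMap R (Localization.AtPrime Q.asIdeal)) ++ ys, by simp [hlen, hlen'],
    fun r hr ↦ ?_, ?_⟩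
  · obtain hr | hr := List.mem_append.mp hr
    · obtain ⟨a, ha, rfl⟩ := List.mem_map.mp hr
      rw [← Ideal.mem_comap, hcomap]
      exact hmem a ha
    · exact hmem' r hr
  · exact (LinearEquiv.isWeaklyRegular_congr
      (localizedModuleEquivTensor Q.asIdeal.primeCompl e) _).mpr
      (isWeaklyRegular_tensor_append
        (fun M' _ _ _ ↦ isWeaklyRegular_tensor_of_isLocalRing hcomap hy M') hreg)

end Depth

theorem tensorRightModule_smul_tmul {R S : Type u} [CommRing R] [CommRing S] [Algebra R S]
    {M : Type u} [AddCommGroup M] [Module R M]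
    {N : Type u} [AddCommGroup N] [Module R N] [Module S N] [IsScalarTower R S N]
    (s : S) (m : M) (n : N) : s • (m ⊗ₜ[R] n) = m ⊗ₜ[R] (s • n) :=
  rfl

section

attribute [local instance] tensorBaseModule

/-- The symmetry of the tensor product as a map linear over the algebra acting on `N`. -/
def tensorRightModuleCommEquiv {R : Type u} (S : Type u) [CommRing R] [CommRing S] [Algebra R S]
    (M : Type u) [AddCommGroup M] [Module R M]
    (N : Type u) [AddCommGroup N] [Module R N] [Module S N] [IsScalarTower R S N] :
    (M ⊗[R] N) ≃ₗ[S] N ⊗[R] M where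
  __ := (TensorProduct.comm R M N).toAddEquiv
  map_smul' _ _ := (TensorProduct.comm R M N).apply_symm_apply _

end

theorem tensor_almostCM_of_almostCM_base_CM_fibers (A B : Type u) [CommRing A] [CommRing B] [IsNoetherianRing A] [IsNoetherianRing B]
    [Algebra A B]
    (M : Type u) [AddCommGroup M] [Module A M] [Module.Finite A M]
    (N : Type u) [AddCommGroup N] [Module A N] [Module B N] [IsScalarTower A B N]
    [Module.Finite B N] [Module.Flat A N]
    (hM : IsAlmostCMModule A M)
    (hfib : ∀ P ∈ Module.support A M, IsCMModule (fiberRing A B P) (fiberModule A B P N)) :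
    IsAlmostCMModule B (M ⊗[A] N) := by
  have hfin : Module.Finite B (M ⊗[A] N) :=
    have := finite_tensor (R := A) (S := B) N M
    Module.Finite.equiv (tensorRightModuleCommEquiv B M N).symm
  have hXN : Module.annihilator B N ≤ Module.annihilator B (M ⊗[A] N) := by
    intro b hb
    rw [Module.mem_annihilator] at hb ⊢
    intro x
    induction x with
    | zero => exact smul_zero _
    | tmul m n => rw [tensorRightModule_smul_tmul, hb, tmul_zero]
    | add x y hx hy => rw [smul_add, hx, hy, add_zero]
  have hXM : (Module.annihilator A M).map (algebraMap A B) ≤ Module.annihilator B (M ⊗[A] N) := by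
    rw [Ideal.map_le_iff_le_comap]
    intro a ha
    rw [Module.mem_annihilator] at ha
    rw [Ideal.mem_comap, Module.mem_annihilator]
    intro x
    induction x with
    | zero => exact smul_zero _
    | tmul m n =>
      rw [tensorRightModule_smul_tmul, algebraMap_smul, ← TensorProduct.smul_tmul, ha, zero_tmul]
    | add x y hx hy => rw [smul_add, hx, hy, add_zero]
  refine isAlmostCMModule_of_heightAt_le fun Q hQ ↦ ?_
  obtain ⟨P, hQP⟩ : ∃ P, PrimeSpectrum.comap (algebraMap A B) Q = P := ⟨_, rfl⟩
  have hXQ := Module.annihilator_le_of_mem_support hQ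
  have hP : P ∈ Module.support A M := by
    rw [Module.mem_support_iff_of_finite, ← hQP]
    exact Ideal.map_le_iff_le_comap.mp (hXM.trans hXQ)
  have hQF : Q ∈ Module.support B (N ⧸ (P.asIdeal.map (algebraMap A B) • ⊤ : Submodule B N)) := by
    rw [Module.support_quotient]
    refine ⟨Module.mem_support_iff_of_finite.mpr (hXN.trans hXQ), ?_⟩
    rw [← hQP]
    exact Ideal.map_le_iff_le_comap.mpr le_rfl
  have hdepth := depthAt_add_depthAt_le (tensorRightModuleCommEquiv B M N) hQP hP (hM P hP) hQF hQ
  calc heightAt B (M ⊗[A] N) Q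
      ≤ heightAt A M P +
        heightAt B (N ⧸ (P.asIdeal.map (algebraMap A B) • ⊤ : Submodule B N)) Q :=
        heightAt_le_heightAt_add_heightAt hXN hXM hQ hQP
    _ ≤ ((depthAt A M P : WithBot ℕ∞) + 1) +
        (depthAt B (N ⧸ (P.asIdeal.map (algebraMap A B) • ⊤ : Submodule B N)) Q : WithBot ℕ∞) :=
        add_le_add (hM.heightAt_le hP)
          (heightAt_le_depthAt_of_isCMModule_fiberModule (hfib P hP) hQP hQF)
    _ = ((depthAt A M P +
        depthAt B (N ⧸ (P.asIdeal.map (algebraMap A B) • ⊤ : Submodule B N)) Q : ℕ∞) :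
          WithBot ℕ∞) + 1 := by
        push_cast
        rw [add_right_comm]
    _ ≤ (depthAt B (M ⊗[A] N) Q : WithBot ℕ∞) + 1 := by
        gcongr
        exact WithBot.coe_le_coe.mpr hdepth

end
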